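/- arXiv:0908.1885 — 3 statements merged into one kernel-verified Lean document; each statement's English description precedes it below -/
import Mathlib

section
/- Let p ≥ 1 be a real number. Let k̃ : ℝ × [0,∞) → ℝ be a smooth function, 2π-periodic in its first (angular) variable θ, with k̃(θ,τ) > 0 everywhere, satisfying the rescaled curve-shortening equation ∂k̃/∂τ = p·k̃^{1+1/p}·∂²k̃/∂θ² + p·k̃^{2+1/p} − p·k̃ on ℝ × (0,∞), and suppose sup_θ |k̃(θ,τ) − 1| → 0 as τ → ∞. Then sup_θ |∂k̃/∂θ (θ,τ)| → 0 as τ → ∞. -/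
open Real Filter Set

/-!
The gradient is controlled by doubling the variables. If `u_τ = a u_θθ + R` and `u` oscillates by at
most `M`, then on a cylinder the increment `u x τ - u y τ` stays below the concave function
`A (x - y) - B (x - y) ^ 2` plus localizing penalties in `y` and `τ`: at a positive interior maximum
of the excess, concavity would make `u_θθ` smaller at `x` than at `y` by about `4 B`, and for large
`B` the equation would then force the increment to decrease in time faster than a maximum allows.
Letting `x` tend to `y` gives `|u_θ| ≤ A`, where `A` can be taken linear in `M` and `sup |R|`.
If moreover `a = a(u)`, `R = b(u)` and `u → ℓ` uniformly, then `M` and `sup |R|` tend to zero as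
soon as `b(ℓ) = 0`; for the normalized curvature `b(k) = p k ^ (2 + 1 / p) - p k` and `ℓ = 1`.
-/

open scoped Topology

section OneVariable

variable {g : ℝ → ℝ} {x b c : ℝ}

lemma deriv_deriv_nonpos_of_isLocalMax (hmax : IsLocalMax g x) (hg : ContinuousAt g x) :
    deriv (deriv g) x ≤ 0 := by
  by_contra! hpos
  -- The second derivative test makes `x` a local minimum too, so `g` is constant near `x`.
  have hmin : IsLocalMin g x := isLocalMin_of_deriv_deriv_pos hpos hmax.deriv_eq_zero hg
  have hconst : g =ᶠ[𝓝 x] fun _ => g x := by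
    filter_upwards [hmax, hmin] with y hle hge using le_antisymm hle hge
  exact hpos.ne' (by simp [hconst.deriv.deriv_eq])

lemma deriv_deriv_le_of_eventually_le_quadratic (hg : ContDiffAt ℝ 2 g x)
    (h : ∀ᶠ y in 𝓝 x, g y ≤ g x + b * (y - x) + c * (y - x) ^ 2) :
    deriv (deriv g) x ≤ 2 * c := by
  set q : ℝ → ℝ := fun y => b * (y - x) + c * (y - x) ^ 2
  have hmax : IsLocalMax (g - q) x := by
    filter_upwards [h] with y hy
    simp only [Pi.sub_apply, q, sub_self]
    linarith
  have hq : ContDiff ℝ 2 q := by fun_prop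
  have hq' : deriv q = fun y => b + 2 * c * (y - x) := by
    funext y
    have hid : HasDerivAt (fun y => y - x) 1 y := (hasDerivAt_id y).sub_const x
    refine ((hid.const_mul b).add ((hid.pow 2).const_mul c)).deriv.trans ?_
    push_cast
    ring
  have hq'' : deriv (deriv q) x = 2 * c := by
    rw [hq']
    simp
  have hsub : deriv (deriv (g - q)) x = deriv (deriv g) x - deriv (deriv q) x := by
    simpa only [iteratedDeriv_succ, iteratedDeriv_zero] using iteratedDeriv_sub hg hq.contDiffAt
  have hnonpos : deriv (deriv (g - q)) x ≤ 0 :=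
    deriv_deriv_nonpos_of_isLocalMax hmax (hg.continuousAt.sub hq.continuous.continuousAt)
  linarith

lemma deriv_le_of_eventually_le_right (hg : DifferentiableAt ℝ g x)
    (h : ∀ᶠ y in 𝓝[>] x, g y ≤ g x + c * (y - x)) : deriv g x ≤ c := by
  have hslope : Tendsto (slope g x) (𝓝[>] x) (𝓝 (deriv g x)) :=
    hg.hasDerivAt.tendsto_slope.mono_left (nhdsGT_le_nhdsNE x)
  refine le_of_tendsto hslope ?_
  filter_upwards [h, self_mem_nhdsWithin] with y hy hxy
  rw [slope_def_field, div_le_iff₀ (sub_pos.2 hxy)]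
  linarith

lemma le_deriv_of_eventually_le_left (hg : DifferentiableAt ℝ g x)
    (h : ∀ᶠ y in 𝓝[<] x, g y ≤ g x + c * (y - x)) : c ≤ deriv g x := by
  have hslope : Tendsto (slope g x) (𝓝[<] x) (𝓝 (deriv g x)) :=
    hg.hasDerivAt.tendsto_slope.mono_left (nhdsLT_le_nhdsNE x)
  refine ge_of_tendsto hslope ?_
  filter_upwards [h, self_mem_nhdsWithin] with y hy hyx
  rw [slope_def_field, le_div_iff_of_neg (sub_neg.2 hyx)]
  linarith

end OneVariable

/-- `u` is a classical solution of the linear parabolic equation `u_τ = a u_θθ + R` at the points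
`(θ, τ)` of `I × J`. All derivatives are two-sided, also at boundary points of `I × J`. -/
structure IsParabolicSolutionOn (a R u : ℝ → ℝ → ℝ) (I J : Set ℝ) : Prop where
  continuousOn : ContinuousOn (fun q : ℝ × ℝ => u q.1 q.2) (I ×ˢ J)
  differentiableAt_time : ∀ x ∈ I, ∀ τ ∈ J, DifferentiableAt ℝ (fun s => u x s) τ
  contDiffAt_space : ∀ x ∈ I, ∀ τ ∈ J, ContDiffAt ℝ 2 (fun z => u z τ) x
  deriv_time_eq : ∀ x ∈ I, ∀ τ ∈ J,
    deriv (fun s => u x s) τ = a x τ * deriv (deriv fun z => u z τ) x + R x τ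

/-- The excess of the increment `u x τ - u y τ` over the concave function
`A (x - y) - B (x - y) ^ 2`, penalized quadratically in `y - θ` and linearly in `T₁ - τ`,
as a function of `(x, y, τ)`. The gradient bound is the maximum principle for this function. -/
def twoPointExcess (u : ℝ → ℝ → ℝ) (A B β γ θ T₁ : ℝ) (q : ℝ × ℝ × ℝ) : ℝ :=
  u q.1 q.2.2 - u q.2.1 q.2.2 - (A * (q.1 - q.2.1) - B * (q.1 - q.2.1) ^ 2)
    - β * (q.2.1 - θ) ^ 2 - γ * (T₁ - q.2.2)

/-- The set of `(x, y, τ)` with `|y - θ| ≤ ρ`, `0 ≤ x - y ≤ ρ` and `T ≤ τ ≤ T₁`, on which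
`twoPointExcess` is maximized. -/
def twoPointDomain (θ ρ T T₁ : ℝ) : Set (ℝ × ℝ × ℝ) :=
  {q | q.2.1 ∈ Icc (θ - ρ) (θ + ρ) ∧ q.1 - q.2.1 ∈ Icc 0 ρ ∧ q.2.2 ∈ Icc T T₁}

section TwoPoint

variable {u : ℝ → ℝ → ℝ} {A B β γ θ ρ T T₁ x y s M : ℝ}

lemma mem_Icc_of_mem_twoPointDomain (hq : (x, y, s) ∈ twoPointDomain θ ρ T T₁) :
    x ∈ Icc (θ - ρ) (θ + 2 * ρ) ∧ y ∈ Icc (θ - ρ) (θ + 2 * ρ) ∧ s ∈ Icc T T₁ := by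
  obtain ⟨hy, hxy, hs⟩ := hq
  exact ⟨⟨by linarith [hy.1, hxy.1], by linarith [hy.2, hxy.2]⟩,
    ⟨hy.1, by linarith [hy.2, hxy.1, hxy.2]⟩, hs⟩

lemma isCompact_twoPointDomain (θ ρ T T₁ : ℝ) : IsCompact (twoPointDomain θ ρ T T₁) := by
  have hbox : IsCompact (Icc (θ - ρ) (θ + 2 * ρ) ×ˢ Icc (θ - ρ) (θ + ρ) ×ˢ Icc T T₁) :=
    isCompact_Icc.prod (isCompact_Icc.prod isCompact_Icc)
  refine hbox.of_isClosed_subset ?_ ?_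
  · exact (isClosed_Icc.preimage (by fun_prop)).inter
      ((isClosed_Icc.preimage (by fun_prop)).inter (isClosed_Icc.preimage (by fun_prop)))
  · rintro ⟨x, y, τ⟩ hq
    exact ⟨(mem_Icc_of_mem_twoPointDomain hq).1, hq.1, hq.2.2⟩

lemma deriv_deriv_le_of_isMaxOn_twoPointExcess
    (hmax : IsMaxOn (twoPointExcess u A B β γ θ T₁) (twoPointDomain θ ρ T T₁) (x, y, s))
    (hy : y ∈ Icc (θ - ρ) (θ + ρ)) (hxy : x - y ∈ Ioo 0 ρ) (hs : s ∈ Icc T T₁)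
    (hu : ContDiffAt ℝ 2 (fun z => u z s) x) :
    deriv (deriv fun z => u z s) x ≤ -2 * B := by
  have htouch : ∀ᶠ z in 𝓝 x,
      u z s ≤ u x s + (A - 2 * B * (x - y)) * (z - x) + -B * (z - x) ^ 2 := by
    filter_upwards [(continuous_sub_right y).continuousAt.eventually_mem (Ioo_mem_nhds hxy.1 hxy.2)]
      with z hz
    have hle := hmax (show (z, y, s) ∈ _ from ⟨hy, Ioo_subset_Icc_self hz, hs⟩)
    simp only [mem_ofPred_eq, twoPointExcess] at hle
    linarith
  linarith [deriv_deriv_le_of_eventually_le_quadratic hu htouch]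

lemma le_deriv_deriv_of_isMaxOn_twoPointExcess
    (hmax : IsMaxOn (twoPointExcess u A B β γ θ T₁) (twoPointDomain θ ρ T T₁) (x, y, s))
    (hy : y ∈ Ioo (θ - ρ) (θ + ρ)) (hxy : x - y ∈ Ioo 0 ρ) (hs : s ∈ Icc T T₁)
    (hu : ContDiffAt ℝ 2 (fun z => u z s) y) :
    2 * B - 2 * β ≤ deriv (deriv fun z => u z s) y := by
  have htouch : ∀ᶠ z in 𝓝 y, -u z s ≤ -u y s +
      (-A + 2 * B * (x - y) + 2 * β * (y - θ)) * (z - y) + (β - B) * (z - y) ^ 2 := by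
    filter_upwards [Ioo_mem_nhds hy.1 hy.2,
      (continuous_sub_left x).continuousAt.eventually_mem (Ioo_mem_nhds hxy.1 hxy.2)] with z hz hxz
    have hle := hmax (show (x, z, s) ∈ _ from
      ⟨Ioo_subset_Icc_self hz, Ioo_subset_Icc_self hxz, hs⟩)
    simp only [mem_ofPred_eq, twoPointExcess] at hle
    linarith
  have hneg := deriv_deriv_le_of_eventually_le_quadratic hu.neg htouch
  simp only [deriv.fun_neg', deriv.fun_neg] at hneg
  linarith

lemma neg_le_deriv_sub_deriv_of_isMaxOn_twoPointExcess
    (hmax : IsMaxOn (twoPointExcess u A B β γ θ T₁) (twoPointDomain θ ρ T T₁) (x, y, s))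
    (hy : y ∈ Icc (θ - ρ) (θ + ρ)) (hxy : x - y ∈ Icc 0 ρ) (hs : s ∈ Ioc T T₁)
    (hux : DifferentiableAt ℝ (fun τ => u x τ) s) (huy : DifferentiableAt ℝ (fun τ => u y τ) s) :
    -γ ≤ deriv (fun τ => u x τ) s - deriv (fun τ => u y τ) s := by
  rw [← deriv_fun_sub hux huy]
  refine le_deriv_of_eventually_le_left (hux.sub huy) ?_
  filter_upwards [Ioo_mem_nhdsLT hs.1] with τ hτ
  have hle := hmax (show (x, y, τ) ∈ _ from ⟨hy, hxy, hτ.1.le, hτ.2.le.trans hs.2⟩)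
  simp only [mem_ofPred_eq, twoPointExcess] at hle
  linarith

lemma mul_sub_mul_sq_nonneg (hB : 0 ≤ B) (hBA : B * ρ ≤ A) {d : ℝ} (hd : d ∈ Icc 0 ρ) :
    0 ≤ A * d - B * d ^ 2 := by
  have hfactor : 0 ≤ A - B * d := sub_nonneg.2 ((mul_le_mul_of_nonneg_left hd.2 hB).trans hBA)
  linarith [mul_nonneg hd.1 hfactor]

lemma twoPointExcess_le_sub (hB : 0 ≤ B) (hβ : 0 ≤ β) (hγ : 0 ≤ γ) (hBA : B * ρ ≤ A)
    (hmem : (x, y, s) ∈ twoPointDomain θ ρ T T₁) :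
    twoPointExcess u A B β γ θ T₁ (x, y, s) ≤ u x s - u y s := by
  have hφ : 0 ≤ A * (x - y) - B * (x - y) ^ 2 := mul_sub_mul_sq_nonneg hB hBA hmem.2.1
  have hyθ : 0 ≤ β * (y - θ) ^ 2 := by positivity
  have hsT₁ : 0 ≤ γ * (T₁ - s) := mul_nonneg hγ (sub_nonneg.2 hmem.2.2.2)
  simp only [twoPointExcess]
  linarith

lemma mem_Ioo_of_twoPointExcess_pos (hB : 0 ≤ B) (hβ : 0 ≤ β) (hγ : 0 ≤ γ)
    (hβM : M ≤ β * ρ ^ 2) (hγM : M ≤ γ * (T₁ - T)) (hAM : M ≤ (A - B * ρ) * ρ) (hBA : B * ρ ≤ A)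
    (hmem : (x, y, s) ∈ twoPointDomain θ ρ T T₁) (hosc : u x s - u y s ≤ M)
    (hpos : 0 < twoPointExcess u A B β γ θ T₁ (x, y, s)) :
    y ∈ Ioo (θ - ρ) (θ + ρ) ∧ x - y ∈ Ioo 0 ρ ∧ s ∈ Ioc T T₁ := by
  obtain ⟨⟨hy, hy'⟩, ⟨hxy, hxy'⟩, hs, hs'⟩ := hmem
  dsimp only at hy hy' hxy hxy' hs hs'
  have hφ : 0 ≤ A * (x - y) - B * (x - y) ^ 2 := mul_sub_mul_sq_nonneg hB hBA ⟨hxy, hxy'⟩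
  have hyθ : 0 ≤ β * (y - θ) ^ 2 := by positivity
  have hsT₁ : 0 ≤ γ * (T₁ - s) := mul_nonneg hγ (sub_nonneg.2 hs')
  simp only [twoPointExcess] at hpos
  refine ⟨⟨hy.lt_of_ne ?_, hy'.lt_of_ne ?_⟩, ⟨hxy.lt_of_ne ?_, hxy'.lt_of_ne ?_⟩,
    hs.lt_of_ne ?_, hs'⟩
  · rintro rfl
    rw [sub_sub_cancel_left, neg_sq] at hyθ hpos
    linarith
  · rintro rfl
    rw [add_sub_cancel_left] at hyθ hpos
    linarith
  · intro h
    obtain rfl : x = y := by linarith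
    linarith
  · intro h
    rw [h] at hφ hpos
    linarith
  · rintro rfl
    linarith

end TwoPoint

namespace IsParabolicSolutionOn

variable {a R u : ℝ → ℝ → ℝ} {I J : Set ℝ}

lemma mono (hu : IsParabolicSolutionOn a R u I J) {I' J' : Set ℝ} (hI : I' ⊆ I) (hJ : J' ⊆ J) :
    IsParabolicSolutionOn a R u I' J' where
  continuousOn := hu.continuousOn.mono (prod_mono hI hJ)
  differentiableAt_time x hx τ hτ := hu.differentiableAt_time x (hI hx) τ (hJ hτ)
  contDiffAt_space x hx τ hτ := hu.contDiffAt_space x (hI hx) τ (hJ hτ)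
  deriv_time_eq x hx τ hτ := hu.deriv_time_eq x (hI hx) τ (hJ hτ)

lemma neg (hu : IsParabolicSolutionOn a R u I J) :
    IsParabolicSolutionOn a (fun x τ => -R x τ) (fun x τ => -u x τ) I J where
  continuousOn := hu.continuousOn.neg
  differentiableAt_time x hx τ hτ := (hu.differentiableAt_time x hx τ hτ).neg
  contDiffAt_space x hx τ hτ := (hu.contDiffAt_space x hx τ hτ).neg
  deriv_time_eq x hx τ hτ := by
    simp only [deriv.fun_neg', deriv.fun_neg, hu.deriv_time_eq x hx τ hτ]
    ring

lemma of_contDiffOn (hI : IsOpen I) (hJ : IsOpen J)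
    (hu : ContDiffOn ℝ 2 (fun q : ℝ × ℝ => u q.1 q.2) (I ×ˢ J))
    (heq : ∀ x ∈ I, ∀ τ ∈ J,
      deriv (fun s => u x s) τ = a x τ * deriv (deriv fun z => u z τ) x + R x τ) :
    IsParabolicSolutionOn a R u I J where
  continuousOn := hu.continuousOn
  differentiableAt_time x hx τ hτ :=
    ((hu.contDiffAt ((hI.prod hJ).mem_nhds ⟨hx, hτ⟩)).differentiableAt two_ne_zero).comp τ
      (f := fun s => (x, s)) (by fun_prop)
  contDiffAt_space x hx τ hτ :=
    (hu.contDiffAt ((hI.prod hJ).mem_nhds ⟨hx, hτ⟩)).comp x (f := fun z => (z, τ)) (by fun_prop)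
  deriv_time_eq := heq

section GradientEstimate

variable {θ ρ T T₁ κ r M A B β γ : ℝ}

lemma continuousOn_twoPointExcess
    (hu : IsParabolicSolutionOn a R u (Icc (θ - ρ) (θ + 2 * ρ)) (Icc T T₁)) :
    ContinuousOn (twoPointExcess u A B β γ θ T₁) (twoPointDomain θ ρ T T₁) := by
  have hx : ContinuousOn (fun q : ℝ × ℝ × ℝ => u q.1 q.2.2) (twoPointDomain θ ρ T T₁) :=
    hu.continuousOn.comp (f := fun q : ℝ × ℝ × ℝ => (q.1, q.2.2)) (by fun_prop)
      fun _ hq => ⟨(mem_Icc_of_mem_twoPointDomain hq).1, hq.2.2⟩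
  have hy : ContinuousOn (fun q : ℝ × ℝ × ℝ => u q.2.1 q.2.2) (twoPointDomain θ ρ T T₁) :=
    hu.continuousOn.comp (f := fun q : ℝ × ℝ × ℝ => (q.2.1, q.2.2)) (by fun_prop)
      fun _ hq => (mem_Icc_of_mem_twoPointDomain hq).2
  exact (((hx.sub hy).sub (by fun_prop)).sub (by fun_prop)).sub (by fun_prop)

lemma le_of_isMaxOn_twoPointExcess {x y s : ℝ}
    (hu : IsParabolicSolutionOn a R u (Icc (θ - ρ) (θ + 2 * ρ)) (Icc T T₁))
    (hκ : 0 ≤ κ) (ha : ∀ x ∈ Icc (θ - ρ) (θ + 2 * ρ), ∀ τ ∈ Icc T T₁, κ ≤ a x τ)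
    (hR : ∀ x ∈ Icc (θ - ρ) (θ + 2 * ρ), ∀ τ ∈ Icc T T₁, |R x τ| ≤ r)
    (hB : 0 ≤ B) (hβB : β ≤ B)
    (hmax : IsMaxOn (twoPointExcess u A B β γ θ T₁) (twoPointDomain θ ρ T T₁) (x, y, s))
    (hy : y ∈ Ioo (θ - ρ) (θ + ρ)) (hxy : x - y ∈ Ioo 0 ρ) (hs : s ∈ Ioc T T₁) :
    κ * (4 * B - 2 * β) ≤ 2 * r + γ := by
  have hmem : (x, y, s) ∈ twoPointDomain θ ρ T T₁ :=
    ⟨Ioo_subset_Icc_self hy, Ioo_subset_Icc_self hxy, Ioc_subset_Icc_self hs⟩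
  obtain ⟨hxI, hyI, hsJ⟩ := mem_Icc_of_mem_twoPointDomain hmem
  have hxx := deriv_deriv_le_of_isMaxOn_twoPointExcess hmax hmem.1 hxy hsJ
    (hu.contDiffAt_space x hxI s hsJ)
  have hyy := le_deriv_deriv_of_isMaxOn_twoPointExcess hmax hy hxy hsJ
    (hu.contDiffAt_space y hyI s hsJ)
  have hτ := neg_le_deriv_sub_deriv_of_isMaxOn_twoPointExcess hmax hmem.1 hmem.2.1 hs
    (hu.differentiableAt_time x hxI s hsJ) (hu.differentiableAt_time y hyI s hsJ)
  rw [hu.deriv_time_eq x hxI s hsJ, hu.deriv_time_eq y hyI s hsJ] at hτ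
  have hdiffx : κ * (2 * B) ≤ a x s * -deriv (deriv fun z => u z s) x :=
    mul_le_mul (ha x hxI s hsJ) (by linarith) (by linarith) (hκ.trans (ha x hxI s hsJ))
  have hdiffy : κ * (2 * B - 2 * β) ≤ a y s * deriv (deriv fun z => u z s) y :=
    mul_le_mul (ha y hyI s hsJ) hyy (by linarith) (hκ.trans (ha y hyI s hsJ))
  have hRx := (abs_le.1 (hR x hxI s hsJ)).2
  have hRy := (abs_le.1 (hR y hyI s hsJ)).1
  linarith

lemma twoPointExcess_nonpos (hu : IsParabolicSolutionOn a R u (Icc (θ - ρ) (θ + 2 * ρ)) (Icc T T₁))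
    (hκ : 0 ≤ κ) (ha : ∀ x ∈ Icc (θ - ρ) (θ + 2 * ρ), ∀ τ ∈ Icc T T₁, κ ≤ a x τ)
    (hR : ∀ x ∈ Icc (θ - ρ) (θ + 2 * ρ), ∀ τ ∈ Icc T T₁, |R x τ| ≤ r)
    (hosc : ∀ x ∈ Icc (θ - ρ) (θ + 2 * ρ), ∀ y ∈ Icc (θ - ρ) (θ + 2 * ρ), ∀ τ ∈ Icc T T₁,
      u x τ - u y τ ≤ M)
    (hβ : 0 ≤ β) (hγ : 0 ≤ γ) (hβB : β ≤ B) (hβM : M ≤ β * ρ ^ 2) (hγM : M ≤ γ * (T₁ - T))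
    (hAM : M ≤ (A - B * ρ) * ρ) (hBA : B * ρ ≤ A) (hBκ : 2 * r + 2 * γ ≤ κ * (4 * B - 2 * β))
    {q : ℝ × ℝ × ℝ} (hq : q ∈ twoPointDomain θ ρ T T₁) :
    twoPointExcess u A B β γ θ T₁ q ≤ 0 := by
  obtain ⟨⟨x, y, s⟩, hmem, hmax⟩ := (isCompact_twoPointDomain θ ρ T T₁).exists_isMaxOn ⟨q, hq⟩
    (hu.continuousOn_twoPointExcess (A := A) (B := B) (β := β) (γ := γ))
  refine (hmax hq).trans ?_
  by_contra! hpos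
  obtain ⟨hxI, hyI, hsJ⟩ := mem_Icc_of_mem_twoPointDomain hmem
  obtain ⟨hy, hxy, hs⟩ := mem_Ioo_of_twoPointExcess_pos (hβ.trans hβB) hβ hγ hβM hγM hAM hBA hmem
    (hosc x hxI y hyI s hsJ) hpos
  have hκB := hu.le_of_isMaxOn_twoPointExcess hκ ha hR (hβ.trans hβB) hβB hmax hy hxy hs
  have hγ₀ : γ = 0 := by linarith
  have hM : M ≤ 0 := by simpa only [hγ₀, zero_mul] using hγM
  have hle := (twoPointExcess_le_sub (hβ.trans hβB) hβ hγ hBA hmem).trans (hosc x hxI y hyI s hsJ)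
  exact hpos.not_ge (hle.trans hM)

lemma sub_le_mul_sub
    (hu : IsParabolicSolutionOn a R u (Icc (θ - ρ) (θ + 2 * ρ)) (Icc T T₁))
    (hρ : 0 < ρ) (hT : T < T₁) (hκ : 0 < κ)
    (ha : ∀ x ∈ Icc (θ - ρ) (θ + 2 * ρ), ∀ τ ∈ Icc T T₁, κ ≤ a x τ)
    (hR : ∀ x ∈ Icc (θ - ρ) (θ + 2 * ρ), ∀ τ ∈ Icc T T₁, |R x τ| ≤ r)
    (hosc : ∀ x ∈ Icc (θ - ρ) (θ + 2 * ρ), ∀ y ∈ Icc (θ - ρ) (θ + 2 * ρ), ∀ τ ∈ Icc T T₁,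
      u x τ - u y τ ≤ M) {x : ℝ} (hx : x ∈ Icc θ (θ + ρ)) :
    u x T₁ - u θ T₁ ≤ (2 * M / ρ + ρ * (r + M / (T₁ - T)) / (2 * κ)) * (x - θ) := by
  have hT₁ : T₁ ∈ Icc T T₁ := right_mem_Icc.2 hT.le
  have hθ : θ ∈ Icc (θ - ρ) (θ + 2 * ρ) := ⟨by linarith, by linarith⟩
  have hM : 0 ≤ M := by simpa only [sub_self] using hosc θ hθ θ hθ T₁ hT₁
  have hr : 0 ≤ r := (abs_nonneg _).trans (hR θ hθ T₁ hT₁)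
  have ht : 0 < T₁ - T := sub_pos.2 hT
  -- `β` and `γ` are just large enough for the penalties to absorb the oscillation `M`.
  set β := M / ρ ^ 2
  set γ := M / (T₁ - T)
  set B := β + (r + γ) / (2 * κ)
  set A := 2 * M / ρ + ρ * (r + γ) / (2 * κ)
  have hβ : 0 ≤ β := by positivity
  have hγ : 0 ≤ γ := by positivity
  have hβB : β ≤ B := le_add_of_nonneg_right (by positivity)
  have hβM : β * ρ ^ 2 = M := div_mul_cancel₀ M (by positivity)
  have hγM : γ * (T₁ - T) = M := div_mul_cancel₀ M ht.ne'
  have hAB : A - B * ρ = M / ρ := by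
    simp only [A, B, β]
    field_simp
    ring
  have hAM : (A - B * ρ) * ρ = M := by rw [hAB, div_mul_cancel₀ M hρ.ne']
  have hBA : B * ρ ≤ A := sub_nonneg.1 (hAB ▸ by positivity)
  have hBκ : κ * (4 * B - 2 * β) = 2 * κ * β + 2 * r + 2 * γ := by
    simp only [B]
    field_simp
    ring
  have hle := hu.twoPointExcess_nonpos hκ.le ha hR hosc hβ hγ hβB hβM.ge hγM.ge hAM.ge hBA
    (by nlinarith) (q := (x, θ, T₁)) ⟨⟨by linarith, by linarith⟩,
      ⟨by linarith [hx.1], by linarith [hx.2]⟩, hT₁⟩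
  simp only [twoPointExcess, sub_self] at hle
  nlinarith [mul_nonneg (hβ.trans hβB) (sq_nonneg (x - θ))]

theorem abs_deriv_le (hu : IsParabolicSolutionOn a R u (Icc (θ - ρ) (θ + 2 * ρ)) (Icc T T₁))
    (hρ : 0 < ρ) (hT : T < T₁) (hκ : 0 < κ)
    (ha : ∀ x ∈ Icc (θ - ρ) (θ + 2 * ρ), ∀ τ ∈ Icc T T₁, κ ≤ a x τ)
    (hR : ∀ x ∈ Icc (θ - ρ) (θ + 2 * ρ), ∀ τ ∈ Icc T T₁, |R x τ| ≤ r)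
    (hosc : ∀ x ∈ Icc (θ - ρ) (θ + 2 * ρ), ∀ y ∈ Icc (θ - ρ) (θ + 2 * ρ), ∀ τ ∈ Icc T T₁,
      u x τ - u y τ ≤ M) :
    |deriv (fun z => u z T₁) θ| ≤ 2 * M / ρ + ρ * (r + M / (T₁ - T)) / (2 * κ) := by
  have hdiff : DifferentiableAt ℝ (fun z => u z T₁) θ :=
    (hu.contDiffAt_space θ ⟨by linarith, by linarith⟩ T₁ (right_mem_Icc.2 hT.le)).differentiableAt
      two_ne_zero
  have hnear : ∀ᶠ x in 𝓝[>] θ, x ∈ Icc θ (θ + ρ) := Icc_mem_nhdsGT (by linarith)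
  refine abs_le'.2 ⟨deriv_le_of_eventually_le_right hdiff ?_, ?_⟩
  · filter_upwards [hnear] with x hx
    linarith [hu.sub_le_mul_sub hρ hT hκ ha hR hosc hx]
  · rw [← deriv.fun_neg]
    refine deriv_le_of_eventually_le_right hdiff.neg ?_
    filter_upwards [hnear] with x hx
    have hle := hu.neg.sub_le_mul_sub (M := M) hρ hT hκ ha (by simpa only [abs_neg] using hR)
      (fun x hx y hy τ hτ => by linarith [hosc y hy x hx τ hτ]) hx
    linarith

end GradientEstimate

theorem tendstoUniformly_deriv_zero {T₀ κ ℓ : ℝ} (hu : IsParabolicSolutionOn a R u univ (Ioi T₀))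
    (hκ : 0 < κ) (ha : ∀ᶠ τ in atTop, ∀ θ, κ ≤ a θ τ)
    (hR : TendstoUniformly (fun τ θ => R θ τ) (fun _ => 0) atTop)
    (hconv : TendstoUniformly (fun τ θ => u θ τ) (fun _ => ℓ) atTop) :
    TendstoUniformly (fun τ θ => deriv (fun x => u x τ) θ) (fun _ => 0) atTop := by
  rw [Metric.tendstoUniformly_iff] at hR hconv ⊢
  intro η hη
  obtain ⟨ε, hε, hεη⟩ : ∃ ε > 0, 4 * ε + 3 * ε / (2 * κ) < η := by
    refine ⟨η / (2 * (4 + 3 / (2 * κ))), by positivity, ?_⟩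
    field_simp
    nlinarith
  obtain ⟨N, hN⟩ := eventually_atTop.1
    ((eventually_gt_atTop T₀).and (ha.and ((hR ε hε).and (hconv ε hε))))
  filter_upwards [eventually_ge_atTop (N + 1)] with τ hτ θ
  have hlate : ∀ s ∈ Icc (τ - 1) τ, N ≤ s := fun s hs => by linarith [hs.1]
  have hcyl : IsParabolicSolutionOn a R u (Icc (θ - 1) (θ + 2 * 1)) (Icc (τ - 1) τ) :=
    hu.mono (subset_univ _) fun s hs => (hN s (hlate s hs)).1
  have hR' : ∀ x, ∀ s ∈ Icc (τ - 1) τ, |R x s| ≤ ε := by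
    intro x s hs
    simpa [Real.dist_eq] using ((hN s (hlate s hs)).2.2.1 x).le
  have hosc : ∀ x y, ∀ s ∈ Icc (τ - 1) τ, u x s - u y s ≤ 2 * ε := by
    intro x y s hs
    have hx := abs_lt.1 ((hN s (hlate s hs)).2.2.2 x)
    have hy := abs_lt.1 ((hN s (hlate s hs)).2.2.2 y)
    linarith [hx.1, hy.2]
  rw [Real.dist_eq, zero_sub, abs_neg]
  refine (hcyl.abs_deriv_le one_pos (by linarith) hκ (fun x _ s hs => (hN s (hlate s hs)).2.1 x)
    (fun x _ => hR' x) (fun x _ y _ => hosc x y)).trans_lt (lt_of_eq_of_lt ?_ hεη)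
  ring

end IsParabolicSolutionOn

theorem first_derivative_sup_tendsto_zero_general {a b : ℝ → ℝ} {u : ℝ → ℝ → ℝ} {T₀ ℓ : ℝ}
    (hu : ContDiffOn ℝ 2 (fun q : ℝ × ℝ => u q.1 q.2) (univ ×ˢ Ioi T₀))
    (ha : ContinuousAt a ℓ) (haℓ : 0 < a ℓ) (hb : ContinuousAt b ℓ) (hbℓ : b ℓ = 0)
    (hpde : ∀ θ, ∀ τ ∈ Ioi T₀,
      deriv (fun s => u θ s) τ = a (u θ τ) * deriv (deriv fun x => u x τ) θ + b (u θ τ))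
    (hconv : TendstoUniformly (fun τ θ => u θ τ) (fun _ => ℓ) atTop) :
    TendstoUniformly (fun τ θ => deriv (fun x => u x τ) θ) (fun _ => 0) atTop := by
  have hlim : Tendsto (fun q : ℝ × ℝ => u q.2 q.1) (atTop ×ˢ ⊤) (𝓝 ℓ) :=
    tendsto_prod_top_iff.2 hconv
  have hsol : IsParabolicSolutionOn (fun θ τ => a (u θ τ)) (fun θ τ => b (u θ τ)) u univ (Ioi T₀) :=
    .of_contDiffOn isOpen_univ isOpen_Ioi hu fun θ _ => hpde θ
  have haκ : ∀ᶠ τ in atTop, ∀ θ, a ℓ / 2 ≤ a (u θ τ) := by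
    simpa only [← principal_univ, eventually_prod_principal_iff, mem_univ, true_imp_iff] using
      hlim.eventually (ha.eventually (le_mem_nhds (half_lt_self haℓ)))
  have hb₀ : TendstoUniformly (fun τ θ => b (u θ τ)) (fun _ => 0) atTop :=
    tendsto_prod_top_iff.1 (hbℓ ▸ hb.tendsto.comp hlim)
  exact hsol.tendstoUniformly_deriv_zero (half_pos haℓ) haκ hb₀ hconv

/-- Corollary 3.3: the uniform norm of the first angular derivative of the
normalized curvature converges to zero as τ → ∞. -/
theorem first_derivative_sup_tendsto_zero
    (p : ℝ) (hp : 1 ≤ p) (K : ℝ → ℝ → ℝ)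
    (hsmooth : ContDiffOn ℝ (⊤ : ℕ∞) (fun q : ℝ × ℝ => K q.1 q.2) (univ ×ˢ Ici 0))
    (hper : ∀ τ : ℝ, Function.Periodic (fun θ => K θ τ) (2 * π))
    (hpos : ∀ θ τ : ℝ, 0 ≤ τ → 0 < K θ τ)
    (hpde : ∀ θ : ℝ, ∀ τ ∈ Ioi (0:ℝ),
      deriv (fun s => K θ s) τ =
        p * K θ τ ^ (1 + 1 / p) * deriv (deriv (fun x => K x τ)) θ
          + p * K θ τ ^ (2 + 1 / p) - p * K θ τ)
    (hconv : TendstoUniformly (fun τ θ => K θ τ) (fun _ => 1) atTop) :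
    TendstoUniformly (fun τ θ => deriv (fun x => K x τ) θ) (fun _ => 0) atTop := by
  have hrpow (e : ℝ) : ContinuousAt (fun k : ℝ => p * k ^ e) 1 :=
    (continuousAt_id.rpow_const (.inl one_ne_zero)).const_mul p
  refine first_derivative_sup_tendsto_zero_general (a := fun k => p * k ^ (1 + 1 / p))
    (b := fun k => p * k ^ (2 + 1 / p) - p * k)
    ((hsmooth.of_le (WithTop.coe_le_coe.2 le_top)).mono (prod_mono_right Ioi_subset_Ici_self))
    (hrpow _) (by simp only [one_rpow]; linarith) ((hrpow _).sub (by fun_prop)) (by simp)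
    (fun θ τ hτ => (hpde θ τ hτ).trans (add_sub_assoc _ _ _)) hconv
end

section
/- Let p ≥ 1 be a real number. Let k̃ : ℝ × [0,∞) → ℝ be a smooth function, 2π-periodic in its first (angular) variable θ, with k̃(θ,τ) > 0 everywhere, satisfying the rescaled curve-shortening equation ∂k̃/∂τ = p·k̃^{1+1/p}·∂²k̃/∂θ² + p·k̃^{2+1/p} − p·k̃ on ℝ × (0,∞), and suppose sup_θ |k̃(θ,τ) − 1| → 0 as τ → ∞. Then for any constant α with 0 < α < 1 there exists A > 0 such that for all τ ≥ A: 4α·∫₀^{2π} (∂k̃/∂θ)² dθ ≤ ∫₀^{2π} (∂²k̃/∂θ²)² dθ. -/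
open Real Filter Set

/-!
The radius of curvature `r = K ^ (-1/p)` evolves by `∂r/∂τ = r - (K'' + K)`. Since `K'' + K` has no
harmonics of order `±1`, each harmonic `F` of `r` of order `±1` solves `F' = F`. It stays bounded
because `K → 1`, whereas `e ^ τ` does not, so it vanishes identically: this is the condition that
the curve closes up. Hence `K' K ^ (-1/p - 1) = -p r'` has only harmonics of order at least `2`, for
which Parseval's identity gives the spectral gap `2 ^ 2 = 4`; and `K'` is close to this function in
`L²`, relative to its own norm, because `K ^ (-1/p - 1) → 1` uniformly.
-/

open MeasureTheory

open scoped Topology Interval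

section Slices

variable {X E : Type*} [NormedAddCommGroup X] [NormedSpace ℝ X] [NormedAddCommGroup E]
  [NormedSpace ℝ E]

theorem hasDerivAt_snd_of_contDiffOn {u : X → ℝ → E} {S : Set ℝ} (hS : IsOpen S)
    (hu : ContDiffOn ℝ 1 (Function.uncurry u) (univ ×ˢ S)) (x : X) {t : ℝ} (ht : t ∈ S) :
    HasDerivAt (u x) (fderiv ℝ (Function.uncurry u) (x, t) (0, 1)) t :=
  ((hu.contDiffAt ((isOpen_univ.prod hS).mem_nhds ⟨mem_univ x, ht⟩)).differentiableAt
    one_ne_zero).hasFDerivAt.comp_hasDerivAt t ((hasDerivAt_const t x).prodMk (hasDerivAt_id t))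

theorem continuousOn_deriv_snd_of_contDiffOn {u : X → ℝ → E} {S : Set ℝ} (hS : IsOpen S)
    (hu : ContDiffOn ℝ 1 (Function.uncurry u) (univ ×ˢ S)) :
    ContinuousOn (fun q : X × ℝ => deriv (u q.1) q.2) (univ ×ˢ S) :=
  ((hu.continuousOn_fderiv_of_isOpen (isOpen_univ.prod hS) le_rfl).clm_apply
    continuousOn_const).congr fun q hq => (hasDerivAt_snd_of_contDiffOn hS hu q.1 hq.2).deriv

end Slices

theorem continuous_slice {X Y Z : Type*} [TopologicalSpace X] [TopologicalSpace Y]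
    [TopologicalSpace Z] {u : X → Y → Z} {S : Set Y}
    (hu : ContinuousOn (Function.uncurry u) (univ ×ˢ S)) {t : Y} (ht : t ∈ S) :
    Continuous fun x => u x t :=
  hu.comp_continuous (f := fun x => (x, t)) (by fun_prop) fun _ => ⟨mem_univ _, ht⟩

section FourierCoefficients

variable {E : Type*} [NormedAddCommGroup E] [NormedSpace ℂ E] {a b : ℝ} (hab : a < b)

theorem intervalIntegrable_fourier_smul {f : ℝ → E} (hf : IntervalIntegrable f volume a b)
    (n : ℤ) :
    IntervalIntegrable (fun x : ℝ => fourier n (x : AddCircle (b - a)) • f x) volume a b :=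
  hf.continuousOn_smul
    ((map_continuous (fourier n)).comp (AddCircle.continuous_mk' (b - a))).continuousOn

theorem fourierCoeffOn_sub {f g : ℝ → E} (hf : IntervalIntegrable f volume a b)
    (hg : IntervalIntegrable g volume a b) (n : ℤ) :
    fourierCoeffOn hab (fun x => f x - g x) n =
      fourierCoeffOn hab f n - fourierCoeffOn hab g n := by
  simp only [fourierCoeffOn_eq_integral, smul_sub]
  rw [intervalIntegral.integral_sub (intervalIntegrable_fourier_smul hf _)
    (intervalIntegrable_fourier_smul hg _), smul_sub]

theorem norm_fourierCoeffOn_le {f : ℝ → E} {C : ℝ} (hC : ∀ x ∈ Ioc a b, ‖f x‖ ≤ C) (n : ℤ) :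
    ‖fourierCoeffOn hab f n‖ ≤ C := by
  have hba : 0 < b - a := sub_pos.2 hab
  have hint := intervalIntegral.norm_integral_le_of_norm_le_const (a := a) (b := b)
    (f := fun x : ℝ => fourier (-n) (x : AddCircle (b - a)) • f x) (C := C) fun x hx => by
      rw [norm_smul, fourier_apply, Circle.norm_coe, one_mul]
      exact hC x (uIoc_of_le hab.le ▸ hx)
  rw [fourierCoeffOn_eq_integral, norm_smul, norm_of_nonneg (by positivity), one_div,
    inv_mul_le_iff₀ hba, mul_comm]
  rwa [abs_of_pos hba] at hint

theorem fourierCoeffOn_deriv {f f' : ℝ → ℂ} (hf : ∀ x ∈ [[a, b]], HasDerivAt f (f' x) x)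
    (hf' : IntervalIntegrable f' volume a b) (hper : f b = f a) (n : ℤ) :
    fourierCoeffOn hab f' n = (2 * π * n / (b - a) : ℝ) * Complex.I * fourierCoeffOn hab f n := by
  rcases eq_or_ne n 0 with rfl | hn
  · have hint : ∫ x in a..b, f' x = 0 := by
      rw [intervalIntegral.integral_eq_sub_of_hasDerivAt hf hf', hper, sub_self]
    simp [fourierCoeffOn_eq_integral, hint]
  · have hba : (b - a : ℂ) ≠ 0 := by exact_mod_cast (sub_pos.2 hab).ne'
    have hπ : (π : ℂ) ≠ 0 := by exact_mod_cast pi_ne_zero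
    have hn' : (n : ℂ) ≠ 0 := by exact_mod_cast hn
    rw [fourierCoeffOn_of_hasDerivAt hab hn hf hf', hper]
    push_cast
    field_simp
    ring

theorem fourierCoeffOn_deriv_deriv {f f' f'' : ℝ → ℂ}
    (hf : ∀ x ∈ [[a, b]], HasDerivAt f (f' x) x) (hf' : ∀ x ∈ [[a, b]], HasDerivAt f' (f'' x) x)
    (hf'' : IntervalIntegrable f'' volume a b) (hper : f b = f a) (hper' : f' b = f' a) (n : ℤ) :
    fourierCoeffOn hab f'' n =
      -((2 * π * n / (b - a) : ℝ) : ℂ) ^ 2 * fourierCoeffOn hab f n := by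
  have hint : IntervalIntegrable f' volume a b :=
    ContinuousOn.intervalIntegrable fun x hx => (hf' x hx).continuousAt.continuousWithinAt
  rw [fourierCoeffOn_deriv hab hf' hf'' hper', fourierCoeffOn_deriv hab hf hint hper]
  linear_combination ((2 * π * n / (b - a) : ℝ) : ℂ) ^ 2 * fourierCoeffOn hab f n * Complex.I_sq

theorem hasDerivAt_fourierCoeffOn {u : ℝ → ℝ → E} {S : Set ℝ} (hS : IsOpen S)
    (hu : ContDiffOn ℝ 1 (Function.uncurry u) (univ ×ˢ S)) (n : ℤ) {t : ℝ} (ht : t ∈ S) :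
    HasDerivAt (fun s => fourierCoeffOn hab (fun x => u x s) n)
      (fourierCoeffOn hab (fun x => deriv (u x) t) n) t := by
  obtain ⟨k, hkt, hkS, hk⟩ := local_compact_nhds (hS.mem_nhds ht)
  have hu' := continuousOn_deriv_snd_of_contDiffOn hS hu
  obtain ⟨C, hC⟩ := (isCompact_uIcc.prod hk).exists_bound_of_continuousOn
    (hu'.mono (prod_mono (subset_univ [[a, b]]) hkS))
  have hslice : ∀ s ∈ S, IntervalIntegrable
      (fun x : ℝ => fourier (-n) (x : AddCircle (b - a)) • u x s) volume a b := fun s hs =>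
    intervalIntegrable_fourier_smul ((continuous_slice hu.continuousOn hs).intervalIntegrable a b) _
  have hslice' := intervalIntegrable_fourier_smul (n := -n)
    ((continuous_slice (u := fun x s => deriv (u x) s) hu' ht).intervalIntegrable a b)
  simp only [fourierCoeffOn_eq_integral]
  refine (intervalIntegral.hasDerivAt_integral_of_dominated_loc_of_deriv_le
    (bound := fun _ => C) hkt
    (F := fun s x => fourier (-n) (x : AddCircle (b - a)) • u x s)
    (F' := fun s x => fourier (-n) (x : AddCircle (b - a)) • deriv (u x) s)
    ?_ (hslice t ht) hslice'.def'.aestronglyMeasurable ?_ intervalIntegrable_const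
    ?_).2.const_smul (1 / (b - a))
  · filter_upwards [hS.mem_nhds ht] with s hs using (hslice s hs).def'.aestronglyMeasurable
  · refine .of_forall fun x hx s hs => ?_
    rw [norm_smul, fourier_apply, Circle.norm_coe, one_mul]
    exact hC (x, s) ⟨uIoc_subset_uIcc hx, hs⟩
  · exact .of_forall fun x _ s hs => ((hasDerivAt_snd_of_contDiffOn hS hu x
      (hkS hs)).differentiableAt.hasDerivAt).const_smul _

end FourierCoefficients

section Wirtinger

variable {a b : ℝ} (hab : a < b)

theorem memLp_Ioc_of_continuousOn {E : Type*} [NormedAddCommGroup E] {f : ℝ → E} (q : ENNReal)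
    (hf : ContinuousOn f (Icc a b)) : MemLp f q (volume.restrict (Ioc a b)) := by
  obtain ⟨C, hC⟩ := isCompact_Icc.exists_bound_of_continuousOn hf
  refine .of_bound ((hf.mono Ioc_subset_Icc_self).aestronglyMeasurable measurableSet_Ioc) C ?_
  filter_upwards [ae_restrict_mem measurableSet_Ioc] with x hx using hC x (Ioc_subset_Icc_self hx)

theorem sq_mul_integral_norm_sq_le_add_of_fourierCoeffOn_eq_zero {f f' g : ℝ → ℂ} (N : ℕ)
    (hf : ∀ x ∈ [[a, b]], HasDerivAt f (f' x) x)
    (hf' : MemLp f' 2 (volume.restrict (Ioc a b))) (hper : f b = f a)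
    (hg : MemLp g 2 (volume.restrict (Ioc a b)))
    (hgN : ∀ n : ℤ, |n| < N → fourierCoeffOn hab g n = 0) :
    (2 * π * N / (b - a)) ^ 2 * ∫ x in a..b, ‖f x‖ ^ 2 ≤
      (∫ x in a..b, ‖f' x‖ ^ 2) + (2 * π * N / (b - a)) ^ 2 * ∫ x in a..b, ‖f x - g x‖ ^ 2 := by
  have hba : 0 < b - a := sub_pos.2 hab
  have hfL2 : MemLp f 2 (volume.restrict (Ioc a b)) := memLp_Ioc_of_continuousOn 2
    fun x hx => (hf x (uIcc_of_le hab.le ▸ hx)).continuousAt.continuousWithinAt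
  have hint {v : ℝ → ℂ} (hv : MemLp v 2 (volume.restrict (Ioc a b))) :
      IntervalIntegrable v volume a b :=
    (intervalIntegrable_iff_integrableOn_Ioc_of_le hab.le).2 (hv.integrable one_le_two)
  have hterm (n : ℤ) : (2 * π * N / (b - a)) ^ 2 * ‖fourierCoeffOn hab f n‖ ^ 2 ≤
      ‖fourierCoeffOn hab f' n‖ ^ 2 +
        (2 * π * N / (b - a)) ^ 2 * ‖fourierCoeffOn hab (fun x => f x - g x) n‖ ^ 2 := by
    rcases lt_or_ge |n| (N : ℤ) with hn | hn
    · rw [fourierCoeffOn_sub hab (hint hfL2) (hint hg), hgN n hn, sub_zero]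
      exact le_add_of_nonneg_left (sq_nonneg _)
    · have hNn : (N : ℝ) ≤ |(n : ℝ)| := by exact_mod_cast hn
      rw [fourierCoeffOn_deriv hab hf (hint hf') hper, norm_mul, norm_mul, Complex.norm_I, mul_one,
        Complex.norm_real, norm_div, norm_mul, norm_of_nonneg two_pi_pos.le, norm_of_nonneg hba.le,
        norm_eq_abs, mul_pow]
      refine le_add_of_le_of_nonneg ?_ (by positivity)
      gcongr
  have hsum := hasSum_le hterm ((hasSum_sq_fourierCoeffOn hab hfL2).mul_left _)
    ((hasSum_sq_fourierCoeffOn hab hf').add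
      ((hasSum_sq_fourierCoeffOn hab (hfL2.sub hg)).mul_left _))
  simp only [smul_eq_mul, Pi.sub_apply, mul_left_comm _ (b - a)⁻¹, ← mul_add] at hsum
  exact le_of_mul_le_mul_left hsum (inv_pos.2 hba)

theorem sq_mul_one_sub_mul_integral_norm_sq_le_of_near {f f' g : ℝ → ℂ} (N : ℕ)
    (hf : ∀ x ∈ [[a, b]], HasDerivAt f (f' x) x)
    (hf' : MemLp f' 2 (volume.restrict (Ioc a b))) (hper : f b = f a)
    (hg : MemLp g 2 (volume.restrict (Ioc a b)))
    (hgN : ∀ n : ℤ, |n| < N → fourierCoeffOn hab g n = 0) {ε : ℝ}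
    (hfg : ∀ x ∈ Icc a b, ‖f x - g x‖ ^ 2 ≤ ε * ‖f x‖ ^ 2) :
    (2 * π * N / (b - a)) ^ 2 * (1 - ε) * ∫ x in a..b, ‖f x‖ ^ 2 ≤ ∫ x in a..b, ‖f' x‖ ^ 2 := by
  have hfL2 : MemLp f 2 (volume.restrict (Ioc a b)) := memLp_Ioc_of_continuousOn 2
    fun x hx => (hf x (uIcc_of_le hab.le ▸ hx)).continuousAt.continuousWithinAt
  have hint {v : ℝ → ℂ} (hv : MemLp v 2 (volume.restrict (Ioc a b))) :
      IntervalIntegrable (fun x => ‖v x‖ ^ 2) volume a b :=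
    (intervalIntegrable_iff_integrableOn_Ioc_of_le hab.le).2 (hv.integrable_norm_pow two_ne_zero)
  have hnear : ∫ x in a..b, ‖f x - g x‖ ^ 2 ≤ ε * ∫ x in a..b, ‖f x‖ ^ 2 := by
    rw [← intervalIntegral.integral_const_mul]
    exact intervalIntegral.integral_mono_on hab.le (hint (hfL2.sub hg))
      ((hint hfL2).const_mul ε) hfg
  have hgap := sq_mul_integral_norm_sq_le_add_of_fourierCoeffOn_eq_zero hab N hf hf' hper hg hgN
  have hscaled := mul_le_mul_of_nonneg_left hnear (sq_nonneg (2 * π * N / (b - a)))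
  linarith

end Wirtinger

theorem eventually_forall_of_tendstoUniformly_const {ι X Y : Type*} [UniformSpace Y]
    {l : Filter ι} {F : ι → X → Y} {c : Y} (hF : TendstoUniformly F (fun _ => c) l)
    {P : Y → Prop} (hP : ∀ᶠ y in 𝓝 c, P y) : ∀ᶠ i in l, ∀ x, P (F i x) := by
  have h := (tendsto_prod_top_iff.2 hF).eventually hP
  rw [← principal_univ, eventually_prod_principal_iff] at h
  exact h.mono fun i hi x => hi x (mem_univ x)

theorem eq_zero_of_hasDerivAt_smul_self_of_isLittleO {E : Type*} [NormedAddCommGroup E]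
    [NormedSpace ℝ E] {F : ℝ → E} {c T : ℝ} (hF : ∀ t > T, HasDerivAt F (c • F t) t)
    (hFo : F =o[atTop] fun t => exp (c * t)) {t : ℝ} (ht : T < t) : F t = 0 := by
  set G : ℝ → E := fun s => exp (-(c * s)) • F s with hG
  have hderiv : ∀ s > T, HasDerivAt G 0 s := fun s hs =>
    (((hasDerivAt_id s).const_mul c).neg.exp.smul (hF s hs)).congr_deriv (by simp [smul_smul])
  have hconst : ∀ s > T, G s = G t := fun s hs =>
    isOpen_Ioi.is_const_of_deriv_eq_zero isPreconnected_Ioi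
      (fun r hr => (hderiv r hr).differentiableAt.differentiableWithinAt)
      (fun r hr => (hderiv r hr).deriv) hs ht
  have hlim : Tendsto G atTop (𝓝 0) := by
    refine tendsto_zero_iff_norm_tendsto_zero.2
      (hFo.norm_left.tendsto_div_nhds_zero.congr fun s => ?_)
    rw [norm_smul, norm_of_nonneg (exp_pos _).le, exp_neg, div_eq_inv_mul]
  have hGt : G t = 0 := tendsto_nhds_unique
    (tendsto_const_nhds.congr' ((eventually_gt_atTop T).mono fun s hs => (hconst s hs).symm)) hlim
  simpa [hG, exp_ne_zero] using hGt

theorem periodic_deriv {𝕜 F : Type*} [NontriviallyNormedField 𝕜] [NormedAddCommGroup F]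
    [NormedSpace 𝕜 F] {f : 𝕜 → F} {c : 𝕜} (hf : Function.Periodic f c) :
    Function.Periodic (deriv f) c := fun x => by
  rw [← deriv_comp_add_const f c x, hf.funext]

/-- `K` is a positive, `2π`-periodic, `C²` solution on the times `τ > T` of the rescaled
curve-shortening equation. Here `K = κ ^ p` for the curvature `κ` of the rescaled convex curve
moving with normal speed `κ ^ p`, and `θ` is the tangent angle. -/
structure IsRescaledFlow (p T : ℝ) (K : ℝ → ℝ → ℝ) : Prop where
  contDiffOn : ContDiffOn ℝ 2 (Function.uncurry K) (univ ×ˢ Ioi T)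
  periodic : ∀ τ > T, Function.Periodic (fun θ => K θ τ) (2 * π)
  pos : ∀ θ, ∀ τ > T, 0 < K θ τ
  deriv_eq : ∀ θ, ∀ τ > T, deriv (K θ) τ =
    p * K θ τ ^ (1 + 1 / p) * deriv (deriv fun x => K x τ) θ + p * K θ τ ^ (2 + 1 / p) - p * K θ τ

/-- The radius of curvature `1 / κ` of the curve with `κ ^ p = K`, as a function of the tangent
angle and time. It linearizes the flow. -/
noncomputable def curvatureRadius (p : ℝ) (K : ℝ → ℝ → ℝ) (θ τ : ℝ) : ℝ :=
  K θ τ ^ (-(1 / p))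

namespace IsRescaledFlow

variable {p T : ℝ} {K : ℝ → ℝ → ℝ} {τ : ℝ}

theorem contDiff (h : IsRescaledFlow p T K) (hτ : T < τ) : ContDiff ℝ 2 fun θ => K θ τ :=
  h.contDiffOn.comp_contDiff (contDiff_id.prodMk contDiff_const) fun _ => ⟨mem_univ _, hτ⟩

theorem hasDerivAt (h : IsRescaledFlow p T K) (hτ : T < τ) (θ : ℝ) :
    HasDerivAt (fun x => K x τ) (deriv (fun x => K x τ) θ) θ :=
  ((h.contDiff hτ).differentiable two_ne_zero θ).hasDerivAt

theorem contDiff_deriv (h : IsRescaledFlow p T K) (hτ : T < τ) :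
    ContDiff ℝ 1 (deriv fun θ => K θ τ) :=
  ContDiff.deriv' (n := 1) (h.contDiff hτ)

theorem hasDerivAt_deriv (h : IsRescaledFlow p T K) (hτ : T < τ) (θ : ℝ) :
    HasDerivAt (deriv fun x => K x τ) (deriv (deriv fun x => K x τ) θ) θ :=
  ((h.contDiff_deriv hτ).differentiable one_ne_zero θ).hasDerivAt

theorem continuous_deriv_deriv (h : IsRescaledFlow p T K) (hτ : T < τ) :
    Continuous (deriv (deriv fun θ => K θ τ)) :=
  (contDiff_one_iff_deriv.1 (h.contDiff_deriv hτ)).2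

theorem continuous_rpow (h : IsRescaledFlow p T K) (hτ : T < τ) (s : ℝ) :
    Continuous fun θ => K θ τ ^ s :=
  (h.contDiff hτ).continuous.rpow_const fun θ => .inl (h.pos θ τ hτ).ne'

theorem contDiffOn_curvatureRadius (h : IsRescaledFlow p T K) :
    ContDiffOn ℝ 2 (Function.uncurry (curvatureRadius p K)) (univ ×ˢ Ioi T) :=
  h.contDiffOn.rpow_const_of_ne fun q hq => (h.pos q.1 q.2 hq.2).ne'

theorem hasDerivAt_curvatureRadius_angle (h : IsRescaledFlow p T K) (hτ : T < τ) (θ : ℝ) :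
    HasDerivAt (fun x => curvatureRadius p K x τ)
      (-(1 / p) * (deriv (fun x => K x τ) θ * K θ τ ^ (-(1 / p) - 1))) θ :=
  ((h.hasDerivAt hτ θ).rpow_const (.inl (h.pos θ τ hτ).ne')).congr_deriv (by ring)

theorem hasDerivAt_curvatureRadius_time (h : IsRescaledFlow p T K) (hp : p ≠ 0) (hτ : T < τ)
    (θ : ℝ) : HasDerivAt (curvatureRadius p K θ)
      (curvatureRadius p K θ τ - deriv (deriv fun x => K x τ) θ - K θ τ) τ := by
  have hpos := h.pos θ τ hτ
  have hK : DifferentiableAt ℝ (K θ) τ := (hasDerivAt_snd_of_contDiffOn isOpen_Ioi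
    (h.contDiffOn.of_le one_le_two) θ hτ).differentiableAt
  have hadd (s : ℝ) : K θ τ ^ s * K θ τ ^ (-(1 / p) - 1) = K θ τ ^ (s + (-(1 / p) - 1)) :=
    (rpow_add hpos _ _).symm
  have hdiffusion : K θ τ ^ (1 + 1 / p) * K θ τ ^ (-(1 / p) - 1) = 1 := by
    rw [hadd, show 1 + 1 / p + (-(1 / p) - 1) = 0 by ring, rpow_zero]
  have hreaction : K θ τ ^ (2 + 1 / p) * K θ τ ^ (-(1 / p) - 1) = K θ τ := by
    rw [hadd, show 2 + 1 / p + (-(1 / p) - 1) = 1 by ring, rpow_one]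
  have hrescaling : K θ τ * K θ τ ^ (-(1 / p) - 1) = curvatureRadius p K θ τ := by
    simpa [curvatureRadius] using hadd 1
  refine (hK.hasDerivAt.rpow_const (p := -(1 / p)) (.inl hpos.ne')).congr_deriv ?_
  rw [h.deriv_eq θ τ hτ]
  have hpp : p * (1 / p) = 1 := mul_one_div_cancel hp
  linear_combination (-(p * (1 / p)) * deriv (deriv fun x => K x τ) θ) * hdiffusion -
    p * (1 / p) * hreaction + p * (1 / p) * hrescaling +
    (curvatureRadius p K θ τ - deriv (deriv fun x => K x τ) θ - K θ τ) * hpp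

theorem hasDerivAt_fourierCoeffOn_curvatureRadius (h : IsRescaledFlow p T K) (hp : p ≠ 0)
    {n : ℤ} (hn : n ^ 2 = 1) (hτ : T < τ) :
    HasDerivAt (fun t => fourierCoeffOn two_pi_pos (fun θ => (curvatureRadius p K θ t : ℂ)) n)
      (fourierCoeffOn two_pi_pos (fun θ => (curvatureRadius p K θ τ : ℂ)) n) τ := by
  have hrsmooth : ContDiffOn ℝ 1 (Function.uncurry fun θ t => (curvatureRadius p K θ t : ℂ))
      (univ ×ˢ Ioi T) :=
    Complex.ofRealCLM.contDiff.comp_contDiffOn (h.contDiffOn_curvatureRadius.of_le one_le_two)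
  have hderiv (θ : ℝ) : deriv (fun t => (curvatureRadius p K θ t : ℂ)) τ =
      curvatureRadius p K θ τ - deriv (deriv fun x => K x τ) θ - K θ τ := by
    exact_mod_cast (h.hasDerivAt_curvatureRadius_time hp hτ θ).ofReal_comp.deriv
  have hr : Continuous fun θ => curvatureRadius p K θ τ := h.continuous_rpow hτ _
  have hK := (h.contDiff hτ).continuous
  have hK'' := h.continuous_deriv_deriv hτ
  have hharmonic := fourierCoeffOn_deriv_deriv two_pi_pos
    (fun θ _ => (h.hasDerivAt hτ θ).ofReal_comp) (fun θ _ => (h.hasDerivAt_deriv hτ θ).ofReal_comp)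
    (Continuous.intervalIntegrable (by fun_prop) _ _) (by simpa using h.periodic τ hτ 0)
    (by simpa using periodic_deriv (h.periodic τ hτ) 0) n
  have hfreq : ((2 * π * n / (2 * π - 0) : ℝ) : ℂ) ^ 2 = 1 := by
    rw [sub_zero, mul_div_cancel_left₀ _ two_pi_pos.ne']
    exact_mod_cast hn
  refine (hasDerivAt_fourierCoeffOn two_pi_pos isOpen_Ioi hrsmooth n hτ).congr_deriv ?_
  simp only [hderiv]
  rw [fourierCoeffOn_sub, fourierCoeffOn_sub, hharmonic, hfreq]
  · ring
  all_goals exact Continuous.intervalIntegrable (by fun_prop) _ _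

theorem fourierCoeffOn_curvatureRadius_eq_zero (h : IsRescaledFlow p T K) (hp : p ≠ 0)
    (hconv : TendstoUniformly (fun τ θ => K θ τ) (fun _ => 1) atTop)
    {n : ℤ} (hn : n ^ 2 = 1) (hτ : T < τ) :
    fourierCoeffOn two_pi_pos (fun θ => (curvatureRadius p K θ τ : ℂ)) n = 0 := by
  have hcont : ContinuousAt (fun y : ℝ => y ^ (-(1 / p))) 1 :=
    continuousAt_rpow_const _ _ (.inl one_ne_zero)
  have hbound : ∀ᶠ y : ℝ in 𝓝 1, ‖y ^ (-(1 / p))‖ ≤ 2 :=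
    hcont.norm.eventually_le_const (by norm_num)
  refine eq_zero_of_hasDerivAt_smul_self_of_isLittleO (c := 1) (T := T)
    (F := fun t => fourierCoeffOn two_pi_pos (fun θ => (curvatureRadius p K θ t : ℂ)) n)
    (fun t ht => ?_) ?_ hτ
  · simpa using h.hasDerivAt_fourierCoeffOn_curvatureRadius hp hn ht
  · refine (Asymptotics.IsBigO.of_bound 2 ?_).trans_isLittleO
      (isLittleO_one_exp_comp.2 (tendsto_id.const_mul_atTop one_pos))
    filter_upwards [eventually_forall_of_tendstoUniformly_const hconv hbound] with t ht
    simpa using norm_fourierCoeffOn_le two_pi_pos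
      (fun θ _ => by simpa [curvatureRadius] using ht θ) n

theorem fourierCoeffOn_deriv_mul_rpow_eq_zero (h : IsRescaledFlow p T K) (hp : p ≠ 0)
    (hconv : TendstoUniformly (fun τ θ => K θ τ) (fun _ => 1) atTop)
    {n : ℤ} (hn : |n| < 2) (hτ : T < τ) :
    fourierCoeffOn two_pi_pos
      (fun θ => ((deriv (fun x => K x τ) θ * K θ τ ^ (-(1 / p) - 1) : ℝ) : ℂ)) n = 0 := by
  have hK' := (h.contDiff_deriv hτ).continuous
  have hpow := h.continuous_rpow hτ (-(1 / p) - 1)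
  have hr' := fourierCoeffOn_deriv two_pi_pos
    (fun θ _ => (h.hasDerivAt_curvatureRadius_angle hτ θ).ofReal_comp)
    (Continuous.intervalIntegrable (by fun_prop) _ _)
    (by simpa [curvatureRadius] using congrArg (· ^ (-(1 / p))) (h.periodic τ hτ 0)) n
  have hzero :
      (n : ℂ) * fourierCoeffOn two_pi_pos (fun θ => (curvatureRadius p K θ τ : ℂ)) n = 0 := by
    rcases eq_or_ne n 0 with rfl | hn0
    · simp
    · have hn1 : n ^ 2 = 1 := by
        have := abs_pos.2 hn0
        rw [← sq_abs, show |n| = 1 by omega, one_pow]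
      rw [h.fourierCoeffOn_curvatureRadius_eq_zero hp hconv hn1 hτ, mul_zero]
  simp_rw [Complex.ofReal_mul (-(1 / p))] at hr'
  rw [fourierCoeffOn.const_mul, sub_zero, mul_div_cancel_left₀ _ two_pi_pos.ne',
    Complex.ofReal_intCast, mul_right_comm, hzero, zero_mul] at hr'
  exact (mul_eq_zero.1 hr').resolve_left (by simpa using hp)

theorem four_mul_integral_deriv_sq_le (h : IsRescaledFlow p T K) (hp : p ≠ 0)
    (hconv : TendstoUniformly (fun τ θ => K θ τ) (fun _ => 1) atTop) (hτ : T < τ) {ε : ℝ}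
    (hε : ∀ θ, (1 - K θ τ ^ (-(1 / p) - 1)) ^ 2 ≤ ε) :
    4 * (1 - ε) * ∫ θ in (0 : ℝ)..(2 * π), deriv (fun x => K x τ) θ ^ 2 ≤
      ∫ θ in (0 : ℝ)..(2 * π), deriv (deriv fun x => K x τ) θ ^ 2 := by
  have hK' := (h.contDiff_deriv hτ).continuous
  have hK'' := h.continuous_deriv_deriv hτ
  have hpow := h.continuous_rpow hτ (-(1 / p) - 1)
  have hgap := sq_mul_one_sub_mul_integral_norm_sq_le_of_near two_pi_pos 2
    (fun θ _ => (h.hasDerivAt_deriv hτ θ).ofReal_comp)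
    (memLp_Ioc_of_continuousOn 2 (by fun_prop))
    (by simpa using periodic_deriv (h.periodic τ hτ) 0)
    (memLp_Ioc_of_continuousOn 2 (by fun_prop))
    (fun n hn => h.fourierCoeffOn_deriv_mul_rpow_eq_zero hp hconv hn hτ) (ε := ε) fun θ _ => ?_
  · have hfreq : 2 * π * (2 : ℕ) / (2 * π - 0) = 2 := by
      rw [sub_zero, mul_div_cancel_left₀ _ two_pi_pos.ne', Nat.cast_ofNat]
    simp only [hfreq, Complex.norm_real, norm_eq_abs, sq_abs] at hgap
    linarith
  · rw [← Complex.ofReal_sub, Complex.norm_real, Complex.norm_real, norm_eq_abs, norm_eq_abs,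
      sq_abs, sq_abs, ← mul_one_sub, mul_pow, mul_comm]
    exact mul_le_mul_of_nonneg_right (hε θ) (sq_nonneg _)

end IsRescaledFlow

theorem gage_hamilton_gap_estimate_general {p T : ℝ} (hp : p ≠ 0) {K : ℝ → ℝ → ℝ}
    (h : IsRescaledFlow p T K)
    (hconv : TendstoUniformly (fun τ θ => K θ τ) (fun _ => 1) atTop) {α : ℝ} (hα : α < 1) :
    ∀ᶠ τ in atTop, 4 * α * (∫ θ in (0 : ℝ)..(2 * π), deriv (fun x => K x τ) θ ^ 2) ≤
      ∫ θ in (0 : ℝ)..(2 * π), deriv (deriv fun x => K x τ) θ ^ 2 := by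
  have hcont : ContinuousAt (fun y : ℝ => (1 - y ^ (-(1 / p) - 1)) ^ 2) 1 :=
    (continuousAt_const.sub (continuousAt_rpow_const _ _ (.inl one_ne_zero))).pow 2
  have hnear : ∀ᶠ y : ℝ in 𝓝 1, (1 - y ^ (-(1 / p) - 1)) ^ 2 ≤ 1 - α :=
    hcont.eventually_le_const (by simpa using hα)
  filter_upwards [eventually_gt_atTop T, eventually_forall_of_tendstoUniformly_const hconv hnear]
    with τ hτ hKτ
  simpa using h.four_mul_integral_deriv_sq_le hp hconv hτ hKτ

/-- Proposition 3.1 (Gage–Hamilton eigenvalue-gap estimate): for any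
`0 < α < 1`, for all sufficiently large times,
`4α·∫ (k̃')² ≤ ∫ (k̃'')²`. -/
theorem gage_hamilton_gap_estimate
    (p : ℝ) (hp : 1 ≤ p) (K : ℝ → ℝ → ℝ)
    (hsmooth : ContDiffOn ℝ (⊤ : ℕ∞) (fun q : ℝ × ℝ => K q.1 q.2) (univ ×ˢ Ici 0))
    (hper : ∀ τ : ℝ, Function.Periodic (fun θ => K θ τ) (2 * π))
    (hpos : ∀ θ τ : ℝ, 0 ≤ τ → 0 < K θ τ)
    (hpde : ∀ θ : ℝ, ∀ τ ∈ Ioi (0:ℝ),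
      deriv (fun s => K θ s) τ =
        p * K θ τ ^ (1 + 1 / p) * deriv (deriv (fun x => K x τ)) θ
          + p * K θ τ ^ (2 + 1 / p) - p * K θ τ)
    (hconv : TendstoUniformly (fun τ θ => K θ τ) (fun _ => 1) atTop) :
    ∀ α : ℝ, 0 < α → α < 1 → ∃ A : ℝ, 0 < A ∧ ∀ τ : ℝ, A ≤ τ →
      4 * α * (∫ θ in (0:ℝ)..(2 * π), (deriv (fun x => K x τ) θ) ^ 2) ≤
        ∫ θ in (0:ℝ)..(2 * π), (deriv (deriv (fun x => K x τ)) θ) ^ 2 := by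
  intro α _ hα
  have hflow : IsRescaledFlow p 0 K :=
    { contDiffOn := (contDiffOn_infty.1 hsmooth 2).mono (prod_mono_right Ioi_subset_Ici_self)
      periodic := fun τ _ => hper τ
      pos := fun θ τ hτ => hpos θ τ (le_of_lt hτ)
      deriv_eq := hpde }
  obtain ⟨A, hA⟩ := eventually_atTop.1
    (gage_hamilton_gap_estimate_general (by positivity) hflow hconv hα)
  exact ⟨max A 1, by positivity, fun τ hτ => hA τ (le_of_max_le_left hτ)⟩
end

section
/- Let p ≥ 1 be a real number. Let k̃ : ℝ × [0,∞) → ℝ be a smooth function, 2π-periodic in its first (angular) variable θ, with k̃(θ,τ) > 0 everywhere, satisfying the rescaled curve-shortening equation ∂k̃/∂τ = p·k̃^{1+1/p}·∂²k̃/∂θ² + p·k̃^{2+1/p} − p·k̃ on ℝ × (0,∞), and suppose sup_θ |k̃(θ,τ) − 1| → 0 as τ → ∞. Then for any constant α with 0 < α < 1 there exists a constant C₄ > 0, depending only on p, α and the initial data k̃(·,0), such that for all τ ≥ 0: (∫₀^{2π} (∂²k̃/∂θ²)² dθ)^{1/2} ≤ C₄·exp(−2αp·τ). -/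
open Real Filter Set

open Function (Periodic uncurry)
open MeasureTheory (volume)
open scoped ContDiff Topology

/-!
Write `k' = ∂k/∂θ`. The closing quantities `∫ k ^ (-1/p) cos (θ - β) dθ` solve `S' = S` in time and
stay bounded, so they vanish identically. After an integration by parts this makes `k'` nearly
orthogonal to the first Fourier modes once `k` is uniformly close to `1`, and Wirtinger's
inequality for `k'` holds with a constant close to `4`. Inserted into the evolution of `‖k'‖²`, it
gives decay like `exp (-2 r τ)` for every `r < 3 p - 1`.

Since `‖k'‖` tends to `0` and `‖k''‖⁴ ≤ ‖k'‖² ‖k'''‖²`, the diffusion term absorbs the nonlinear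
terms in the evolution of `‖k''‖²`, up to a multiple of `‖k'‖²`, so `‖k''‖²` inherits the rate.
For `p ≥ 1` and `α < 1` one has `2 α p < 2 p ≤ 3 p - 1`.
-/

section PeriodicFunctions

theorem sq_integral_mul_le {f g : ℝ → ℝ} {a b : ℝ} (hab : a ≤ b) (hf : Continuous f)
    (hg : Continuous g) :
    (∫ x in a..b, f x * g x) ^ 2 ≤ (∫ x in a..b, f x ^ 2) * ∫ x in a..b, g x ^ 2 := by
  have hquad (r : ℝ) : 0 ≤ (∫ x in a..b, g x ^ 2) * (r * r) +
      2 * (∫ x in a..b, f x * g x) * r + ∫ x in a..b, f x ^ 2 := by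
    calc 0 ≤ ∫ x in a..b, (f x + r * g x) ^ 2 :=
          intervalIntegral.integral_nonneg hab fun x _ => sq_nonneg _
      _ = ∫ x in a..b, (r * r * g x ^ 2 + 2 * r * (f x * g x) + f x ^ 2) := by
          congr 1; funext x; ring
      _ = _ := by
          rw [intervalIntegral.integral_add, intervalIntegral.integral_add,
            intervalIntegral.integral_const_mul, intervalIntegral.integral_const_mul]
          · ring
          all_goals exact Continuous.intervalIntegrable (by fun_prop) _ _
  have hdiscrim := discrim_le_zero hquad
  rw [discrim] at hdiscrim
  linarith

theorem periodic_deriv_s12 {f : ℝ → ℝ} {T : ℝ} (hf : Periodic f T) : Periodic (deriv f) T := fun x => by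
  rw [← deriv_comp_add_const, funext hf]

theorem integral_deriv_eq_zero_of_periodic {f : ℝ → ℝ} {T : ℝ} (hf : ContDiff ℝ 1 f)
    (hfT : Periodic f T) : ∫ x in (0 : ℝ)..T, deriv f x = 0 := by
  rw [intervalIntegral.integral_deriv_eq_sub (fun x _ => hf.differentiable_one x)
    (hf.continuous_deriv_one.intervalIntegrable _ _), hfT.eq, sub_self]

theorem integral_mul_deriv_eq_neg_of_periodic {u v : ℝ → ℝ} {T : ℝ} (hu : ContDiff ℝ 1 u)
    (hv : ContDiff ℝ 1 v) (huT : Periodic u T) (hvT : Periodic v T) :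
    ∫ x in (0 : ℝ)..T, u x * deriv v x = -∫ x in (0 : ℝ)..T, deriv u x * v x := by
  rw [intervalIntegral.integral_mul_deriv_eq_deriv_mul
    (fun x _ => (hu.differentiable_one x).hasDerivAt)
    (fun x _ => (hv.differentiable_one x).hasDerivAt)
    (hu.continuous_deriv_one.intervalIntegrable _ _)
    (hv.continuous_deriv_one.intervalIntegrable _ _), huT.eq, hvT.eq]
  ring

theorem sq_le_mul_integral_sq_deriv_of_eq_zero {v : ℝ → ℝ} {a b x₀ x : ℝ} (hv : ContDiff ℝ 1 v)
    (hx₀ : x₀ ∈ Icc a b) (hv₀ : v x₀ = 0) (hx : x ∈ Icc a b) :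
    v x ^ 2 ≤ (b - a) * ∫ y in a..b, deriv v y ^ 2 := by
  have hab : a ≤ b := hx.1.trans hx.2
  have hv' : Continuous (deriv v) := hv.continuous_deriv_one
  have hle : |v x| ≤ ∫ y in a..b, |deriv v y| := by
    calc |v x| = ‖∫ y in x₀..x, deriv v y‖ := by
          rw [intervalIntegral.integral_deriv_eq_sub (fun y _ => hv.differentiable_one y)
            (hv'.intervalIntegrable _ _), hv₀, sub_zero, norm_eq_abs]
      _ ≤ ∫ y in uIoc x₀ x, ‖deriv v y‖ := intervalIntegral.norm_integral_le_integral_norm_uIoc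
      _ ≤ ∫ y in Ioc a b, |deriv v y| :=
          MeasureTheory.setIntegral_mono_set
            (hv'.abs.continuousOn.integrableOn_Icc.mono_set Ioc_subset_Icc_self)
            (.of_forall fun y => abs_nonneg _)
            (Ioc_subset_Ioc (le_min hx₀.1 hx.1) (max_le hx₀.2 hx.2)).eventuallyLE
      _ = ∫ y in a..b, |deriv v y| := (intervalIntegral.integral_of_le hab).symm
  calc v x ^ 2 = |v x| ^ 2 := (sq_abs _).symm
    _ ≤ (∫ y in a..b, 1 * |deriv v y|) ^ 2 := by simp only [one_mul]; gcongr
    _ ≤ (∫ _ in a..b, 1 ^ 2) * ∫ y in a..b, |deriv v y| ^ 2 :=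
        sq_integral_mul_le hab continuous_const hv'.abs
    _ = _ := by simp

theorem sq_deriv_le_of_periodic {u : ℝ → ℝ} {T x : ℝ} (hT : 0 < T) (hu : ContDiff ℝ 2 u)
    (huT : Periodic u T) (hx : x ∈ Icc 0 T) :
    deriv u x ^ 2 ≤ T * ∫ y in (0 : ℝ)..T, deriv (deriv u) y ^ 2 := by
  obtain ⟨x₀, hx₀, hu₀⟩ := exists_deriv_eq_zero hT hu.continuous.continuousOn huT.eq.symm
  simpa using sq_le_mul_integral_sq_deriv_of_eq_zero hu.deriv' (Ioo_subset_Icc_self hx₀) hu₀ hx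

theorem sq_integral_sq_deriv_le_of_periodic {v : ℝ → ℝ} {T : ℝ} (hT : 0 ≤ T) (hv : ContDiff ℝ 2 v)
    (hvT : Periodic v T) :
    (∫ x in (0 : ℝ)..T, deriv v x ^ 2) ^ 2 ≤
      (∫ x in (0 : ℝ)..T, v x ^ 2) * ∫ x in (0 : ℝ)..T, deriv (deriv v) x ^ 2 := by
  have hv' : ContDiff ℝ 1 (deriv v) := hv.deriv'
  have hparts := integral_mul_deriv_eq_neg_of_periodic (hv.of_le one_le_two) hv' hvT
    (periodic_deriv_s12 hvT)
  simp only [← sq] at hparts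
  rw [← neg_eq_iff_eq_neg.2 hparts, neg_sq]
  exact sq_integral_mul_le hT hv.continuous hv'.continuous_deriv_one

end PeriodicFunctions

section Wirtinger

theorem hasSum_norm_sq_fourierCoeffOn_ofReal {u : ℝ → ℝ} {a b : ℝ} (hab : a < b)
    (hu : Continuous u) :
    HasSum (fun n : ℤ => ‖fourierCoeffOn hab (fun x => (u x : ℂ)) n‖ ^ 2)
      ((b - a)⁻¹ * ∫ x in a..b, u x ^ 2) := by
  have hL2 : MeasureTheory.MemLp (fun x => (u x : ℂ)) 2 (volume.restrict (Ioc a b)) := by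
    obtain ⟨C, hC⟩ := isCompact_Icc.exists_bound_of_continuousOn (s := Icc a b) hu.continuousOn
    refine .of_bound (by fun_prop) C ?_
    filter_upwards [MeasureTheory.ae_restrict_mem measurableSet_Ioc] with x hx
    simpa using hC x (Ioc_subset_Icc_self hx)
  simpa using hasSum_sq_fourierCoeffOn hab hL2

theorem norm_sq_fourierCoeffOn_deriv {v : ℝ → ℝ} {a b : ℝ} (hab : a < b) (hv : ContDiff ℝ 1 v)
    (hvab : v b = v a) (n : ℤ) :
    ‖fourierCoeffOn hab (fun x => ((deriv v x : ℝ) : ℂ)) n‖ ^ 2 =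
      (2 * π * n / (b - a)) ^ 2 * ‖fourierCoeffOn hab (fun x => (v x : ℂ)) n‖ ^ 2 := by
  have hv' : Continuous (deriv v) := hv.continuous_deriv_one
  rcases eq_or_ne n 0 with rfl | hn
  · rw [fourierCoeffOn_eq_integral]
    simp [intervalIntegral.integral_ofReal,
      intervalIntegral.integral_deriv_eq_sub (fun x _ => hv.differentiable_one x)
        (hv'.intervalIntegrable _ _), hvab]
  · have hn' : (n : ℝ) ≠ 0 := mod_cast hn
    have hba : b - a ≠ 0 := (sub_pos.2 hab).ne'
    rw [fourierCoeffOn_of_hasDerivAt hab hn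
      (fun x _ => (hv.differentiable_one x).hasDerivAt.ofReal_comp)
      (Continuous.intervalIntegrable (by fun_prop) _ _), hvab]
    simp [← Complex.ofReal_sub, abs_of_pos pi_pos, mul_pow]
    field_simp

theorem norm_sq_fourierCoeffOn_two_pi {v : ℝ → ℝ} (hv : Continuous v) (n : ℤ) :
    ‖fourierCoeffOn two_pi_pos (fun x => (v x : ℂ)) n‖ ^ 2 = ((2 * π)⁻¹) ^ 2 *
      ((∫ x in (0 : ℝ)..2 * π, v x * cos (n * x)) ^ 2 +
        (∫ x in (0 : ℝ)..2 * π, v x * sin (n * x)) ^ 2) := by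
  have hcoeff : fourierCoeffOn two_pi_pos (fun x => (v x : ℂ)) n = (((2 * π)⁻¹ : ℝ) : ℂ) *
      (((∫ x in (0 : ℝ)..2 * π, v x * cos (n * x) : ℝ) : ℂ) -
        ((∫ x in (0 : ℝ)..2 * π, v x * sin (n * x) : ℝ) : ℂ) * Complex.I) := by
    rw [fourierCoeffOn_eq_integral, ← intervalIntegral.integral_ofReal,
      ← intervalIntegral.integral_ofReal, ← intervalIntegral.integral_mul_const,
      ← intervalIntegral.integral_sub, sub_zero, one_div, Complex.real_smul]
    · congr 1
      refine intervalIntegral.integral_congr fun x _ => ?_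
      have harg : 2 * (π : ℂ) * Complex.I * ((-n : ℤ) : ℂ) * x / ((2 * π : ℝ) : ℂ) =
          ((-(n * x) : ℝ) : ℂ) * Complex.I := by
        have : (π : ℂ) ≠ 0 := mod_cast pi_ne_zero
        push_cast
        field_simp
      simp only [fourier_coe_apply, smul_eq_mul]
      rw [harg, Complex.exp_mul_I, ← Complex.ofReal_cos, ← Complex.ofReal_sin, cos_neg, sin_neg]
      push_cast
      ring
    all_goals exact Continuous.intervalIntegrable (by fun_prop) _ _
  rw [hcoeff, norm_mul, mul_pow, Complex.norm_real, norm_eq_abs, sq_abs,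
    ← Complex.normSq_eq_norm_sq]
  congr 1
  simp [Complex.normSq_apply, sq]

/- Parseval turns the claim into `4 |cₙ|² - 3 |cₙ|² [|n| = 1] ≤ n² |cₙ|²`, with `c₀ = 0`. -/
theorem four_mul_integral_sq_sub_le_integral_sq_deriv {v : ℝ → ℝ} (hv : ContDiff ℝ 1 v)
    (hvT : Periodic v (2 * π)) (hmean : ∫ x in (0 : ℝ)..2 * π, v x = 0) :
    4 * (∫ x in (0 : ℝ)..2 * π, v x ^ 2) - 3 / π *
        ((∫ x in (0 : ℝ)..2 * π, v x * cos x) ^ 2 + (∫ x in (0 : ℝ)..2 * π, v x * sin x) ^ 2) ≤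
      ∫ x in (0 : ℝ)..2 * π, deriv v x ^ 2 := by
  set c : ℤ → ℝ := fun n => ‖fourierCoeffOn two_pi_pos (fun x => (v x : ℂ)) n‖ ^ 2 with hc
  set S := (∫ x in (0 : ℝ)..2 * π, v x * cos x) ^ 2 + (∫ x in (0 : ℝ)..2 * π, v x * sin x) ^ 2
  have hc_one : c 1 = ((2 * π)⁻¹) ^ 2 * S := by
    simpa using norm_sq_fourierCoeffOn_two_pi hv.continuous 1
  have hc_neg_one : c (-1) = ((2 * π)⁻¹) ^ 2 * S := by
    simpa [intervalIntegral.integral_neg] using norm_sq_fourierCoeffOn_two_pi hv.continuous (-1)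
  have hc_zero : c 0 = 0 := by
    simpa [hc, hmean] using norm_sq_fourierCoeffOn_two_pi hv.continuous 0
  have hsum : HasSum c ((2 * π)⁻¹ * ∫ x in (0 : ℝ)..2 * π, v x ^ 2) := by
    simpa using hasSum_norm_sq_fourierCoeffOn_ofReal two_pi_pos hv.continuous
  have hsum_deriv : HasSum (fun n : ℤ => (n : ℝ) ^ 2 * c n)
      ((2 * π)⁻¹ * ∫ x in (0 : ℝ)..2 * π, deriv v x ^ 2) := by
    simpa [norm_sq_fourierCoeffOn_deriv two_pi_pos hv hvT.eq, two_pi_pos.ne'] using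
      hasSum_norm_sq_fourierCoeffOn_ofReal two_pi_pos hv.continuous_deriv_one
  have hmode (n : ℤ) : 4 * c n - (if n = 1 then 3 * c 1 else 0) -
      (if n = -1 then 3 * c (-1) else 0) ≤ (n : ℝ) ^ 2 * c n := by
    rcases (by grind : n = 0 ∨ n = 1 ∨ n = -1 ∨ 2 ≤ |n|) with rfl | rfl | rfl | hn
    · simp [hc_zero]
    · norm_num; linarith
    · norm_num; linarith
    · have h4 : (2 : ℝ) ^ 2 ≤ (n : ℝ) ^ 2 := sq_le_sq.2 (by rw [abs_two]; exact_mod_cast hn)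
      have hc0 : 0 ≤ c n := sq_nonneg _
      rw [if_neg (by grind), if_neg (by grind)]
      nlinarith
  have hle := hasSum_le hmode (((hsum.mul_left 4).sub (hasSum_ite_eq 1 _)).sub
    (hasSum_ite_eq (-1) _)) hsum_deriv
  rw [hc_one, hc_neg_one] at hle
  calc _ = 2 * π * (4 * ((2 * π)⁻¹ * ∫ x in (0 : ℝ)..2 * π, v x ^ 2) -
        3 * (((2 * π)⁻¹) ^ 2 * S) - 3 * (((2 * π)⁻¹) ^ 2 * S)) := by field_simp; ring
    _ ≤ 2 * π * ((2 * π)⁻¹ * ∫ x in (0 : ℝ)..2 * π, deriv v x ^ 2) := by gcongr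
    _ = _ := mul_inv_cancel_left₀ two_pi_pos.ne' _

end Wirtinger

section ExponentialDecay

theorem le_mul_exp_of_hasDerivAt_le {f f' : ℝ → ℝ} {c T t : ℝ}
    (hf : ∀ s, T ≤ s → HasDerivAt f (f' s) s) (hf' : ∀ s, T ≤ s → f' s ≤ c * f s) (ht : T ≤ t) :
    f t ≤ f T * exp (c * (t - T)) := by
  rw [← gronwallBound_ε0]
  exact le_gronwallBound_of_liminf_deriv_right_le (b := t)
    (fun s hs => (hf s hs.1).continuousAt.continuousWithinAt)
    (fun s hs _ hr => (hf s hs.1).hasDerivWithinAt.liminf_right_slope_le hr) le_rfl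
    (fun s hs => by simpa using hf' s hs.1) t ⟨ht, le_rfl⟩

theorem eq_mul_exp_of_hasDerivAt_eq {f : ℝ → ℝ} {c T t : ℝ}
    (hf : ∀ s, T ≤ s → HasDerivAt f (c * f s) s) (ht : T ≤ t) : f t = f T * exp (c * (t - T)) := by
  refine le_antisymm (le_mul_exp_of_hasDerivAt_le hf (fun _ _ => le_rfl) ht) ?_
  have hneg := le_mul_exp_of_hasDerivAt_le (f := fun s => -f s) (c := c)
    (fun s hs => (hf s hs).neg) (fun _ _ => (mul_neg _ _).ge) ht
  linarith

theorem eq_zero_of_hasDerivAt_mul_self_of_bounded {f : ℝ → ℝ} {c C T : ℝ} (hc : 0 < c)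
    (hf : ∀ t, T ≤ t → HasDerivAt f (c * f t) t) (hC : ∀ᶠ t in atTop, |f t| ≤ C) : f T = 0 := by
  have hlim : Tendsto (fun t => C * exp (-(c * (t - T)))) atTop (𝓝 (C * 0)) :=
    (tendsto_exp_neg_atTop_nhds_zero.comp <|
      (tendsto_atTop_add_const_right atTop (-T) tendsto_id).const_mul_atTop hc).const_mul C
  refine abs_nonpos_iff.1 (ge_of_tendsto (mul_zero C ▸ hlim) ?_)
  filter_upwards [hC, eventually_ge_atTop T] with t htC ht
  rw [exp_neg, ← div_eq_mul_inv, le_div_iff₀ (exp_pos _), ← abs_of_pos (exp_pos (c * (t - T))),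
    ← abs_mul, ← eq_mul_exp_of_hasDerivAt_eq hf ht]
  exact htC

theorem exists_eventually_le_mul_exp {f f' : ℝ → ℝ} {c : ℝ}
    (hf : ∀ᶠ t in atTop, HasDerivAt f (f' t) t) (hf' : ∀ᶠ t in atTop, f' t ≤ c * f t) :
    ∃ C, ∀ᶠ t in atTop, f t ≤ C * exp (c * t) := by
  obtain ⟨T, hT⟩ := eventually_atTop.1 (hf.and hf')
  refine ⟨f T * exp (-(c * T)), ?_⟩
  filter_upwards [eventually_ge_atTop T] with t ht
  calc f t ≤ f T * exp (c * (t - T)) :=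
        le_mul_exp_of_hasDerivAt_le (fun s hs => (hT s hs).1) (fun s hs => (hT s hs).2) ht
    _ = f T * exp (-(c * T)) * exp (c * t) := by rw [mul_assoc, ← exp_add]; ring_nf

theorem exists_forall_le_mul_exp {f : ℝ → ℝ} {c : ℝ} (hf : ContinuousOn f (Ici 0))
    (hdecay : ∃ C, ∀ᶠ t in atTop, f t ≤ C * exp (c * t)) :
    ∃ C, 0 < C ∧ ∀ t, 0 ≤ t → f t ≤ C * exp (c * t) := by
  obtain ⟨C₁, hC₁⟩ := hdecay
  obtain ⟨T, hT⟩ := eventually_atTop.1 hC₁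
  obtain ⟨C₂, hC₂⟩ := isCompact_Icc.exists_bound_of_continuousOn (s := Icc 0 T)
    (f := fun t => f t * exp (-(c * t))) ((hf.mono Icc_subset_Ici_self).mul (by fun_prop))
  refine ⟨max (max C₁ C₂) 1, by positivity, fun t ht => ?_⟩
  rcases le_total T t with hTt | htT
  · exact (hT t hTt).trans (by gcongr; simp)
  · have hle : f t * exp (-(c * t)) ≤ C₂ := (le_abs_self _).trans (hC₂ t ⟨ht, htT⟩)
    rw [exp_neg, ← div_eq_mul_inv, div_le_iff₀ (exp_pos _)] at hle
    exact hle.trans (by gcongr; simp)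

end ExponentialDecay

section Families

/-- The derivative of a time-dependent function `F x t` in the space variable `x`. -/
noncomputable def spaceDeriv (F : ℝ → ℝ → ℝ) (x t : ℝ) : ℝ := deriv (fun y => F y t) x

/-- The derivative of a time-dependent function `F x t` in the time variable `t`. -/
noncomputable def timeDeriv (F : ℝ → ℝ → ℝ) (x t : ℝ) : ℝ := deriv (F x) t

/-- The squared `L²` norm of a `2π`-periodic function over one period. -/
noncomputable def l2NormSq (f : ℝ → ℝ) : ℝ := ∫ x in (0 : ℝ)..2 * π, f x ^ 2

theorem l2NormSq_nonneg (f : ℝ → ℝ) : 0 ≤ l2NormSq f :=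
  intervalIntegral.integral_nonneg two_pi_pos.le fun _ _ => sq_nonneg _

variable {F : ℝ → ℝ → ℝ} {J : Set ℝ} {x t : ℝ}

theorem contDiff_slice (hF : ContDiffOn ℝ ∞ (uncurry F) (univ ×ˢ J)) (ht : t ∈ J) :
    ContDiff ℝ ∞ fun x => F x t :=
  contDiffOn_univ.1 <| hF.comp (f := fun x : ℝ => (x, t)) (by fun_prop) fun _ _ => ⟨mem_univ _, ht⟩

theorem spaceDeriv_eq_of_hasFDerivWithinAt {f' : ℝ × ℝ →L[ℝ] ℝ} (ht : t ∈ J)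
    (hF : HasFDerivWithinAt (uncurry F) f' (univ ×ˢ J) (x, t)) : spaceDeriv F x t = f' (1, 0) :=
  (HasFDerivWithinAt.comp_hasDerivAt (f := fun y => (y, t)) x hF
    ((hasDerivAt_id x).prodMk (hasDerivAt_const x t))
    (.of_forall fun _ => mk_mem_prod (mem_univ _) ht)).deriv

theorem timeDeriv_eq_of_hasFDerivAt {f' : ℝ × ℝ →L[ℝ] ℝ} (hF : HasFDerivAt (uncurry F) f' (x, t)) :
    timeDeriv F x t = f' (0, 1) :=
  (HasFDerivAt.comp_hasDerivAt (f := fun s => (x, s)) t hF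
    ((hasDerivAt_const t x).prodMk (hasDerivAt_id t))).deriv

theorem contDiffOn_spaceDeriv (hJ : UniqueDiffOn ℝ J)
    (hF : ContDiffOn ℝ ∞ (uncurry F) (univ ×ˢ J)) :
    ContDiffOn ℝ ∞ (uncurry (spaceDeriv F)) (univ ×ˢ J) :=
  ((hF.fderivWithin (uniqueDiffOn_univ.prod hJ) (m := ∞) (by simp)).clm_apply
    (contDiffOn_const (c := ((1, 0) : ℝ × ℝ)))).congr fun q hq =>
      spaceDeriv_eq_of_hasFDerivWithinAt hq.2 (hF.differentiableOn (by simp) q hq).hasFDerivWithinAt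

theorem contDiffAt_uncurry (hJ : IsOpen J) (hF : ContDiffOn ℝ ∞ (uncurry F) (univ ×ˢ J))
    (ht : t ∈ J) : ContDiffAt ℝ ∞ (uncurry F) (x, t) :=
  hF.contDiffAt ((isOpen_univ.prod hJ).mem_nhds ⟨mem_univ _, ht⟩)

theorem contDiffOn_timeDeriv (hJ : IsOpen J) (hF : ContDiffOn ℝ ∞ (uncurry F) (univ ×ˢ J)) :
    ContDiffOn ℝ ∞ (uncurry (timeDeriv F)) (univ ×ˢ J) :=
  ((hF.fderiv_of_isOpen (isOpen_univ.prod hJ) (m := ∞) (by simp)).clm_apply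
    (contDiffOn_const (c := ((0, 1) : ℝ × ℝ)))).congr fun _ hq =>
      timeDeriv_eq_of_hasFDerivAt
        ((contDiffAt_uncurry hJ hF hq.2).differentiableAt (by simp)).hasFDerivAt

theorem hasDerivAt_timeDeriv (hJ : IsOpen J) (hF : ContDiffOn ℝ ∞ (uncurry F) (univ ×ˢ J))
    (ht : t ∈ J) : HasDerivAt (F x) (timeDeriv F x t) t := by
  have hFx : ContDiffAt ℝ ∞ (uncurry F) (x, t) := contDiffAt_uncurry hJ hF ht
  exact ((hFx.comp t (f := fun s => (x, s)) (by fun_prop)).differentiableAt (by simp)).hasDerivAt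

theorem timeDeriv_spaceDeriv_comm (hJ : IsOpen J) (hF : ContDiffOn ℝ ∞ (uncurry F) (univ ×ˢ J))
    (ht : t ∈ J) : timeDeriv (spaceDeriv F) x t = spaceDeriv (timeDeriv F) x t := by
  have hFd {q : ℝ × ℝ} (hq : q ∈ univ ×ˢ J) :
      HasFDerivAt (uncurry F) (fderiv ℝ (uncurry F) q) q :=
    ((contDiffAt_uncurry hJ hF hq.2).differentiableAt (by simp)).hasFDerivAt
  have hFd₂ : HasFDerivAt (fderiv ℝ (uncurry F)) (fderiv ℝ (fderiv ℝ (uncurry F)) (x, t)) (x, t) :=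
    (((contDiffAt_uncurry hJ hF ht).fderiv_right (m := ∞) (by simp)).differentiableAt
      (by simp)).hasFDerivAt
  have hmem : ∀ᶠ q in 𝓝 (x, t), q ∈ univ ×ˢ J :=
    (isOpen_univ.prod hJ).mem_nhds ⟨mem_univ _, ht⟩
  have hspace : uncurry (spaceDeriv F) =ᶠ[𝓝 (x, t)] fun q => fderiv ℝ (uncurry F) q (1, 0) :=
    hmem.mono fun q hq => spaceDeriv_eq_of_hasFDerivWithinAt hq.2 (hFd hq).hasFDerivWithinAt
  have htime : uncurry (timeDeriv F) =ᶠ[𝓝 (x, t)] fun q => fderiv ℝ (uncurry F) q (0, 1) :=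
    hmem.mono fun q hq => timeDeriv_eq_of_hasFDerivAt (hFd hq)
  rw [timeDeriv_eq_of_hasFDerivAt
      ((hFd₂.clm_apply (hasFDerivAt_const ((1, 0) : ℝ × ℝ) _)).congr_of_eventuallyEq hspace),
    spaceDeriv_eq_of_hasFDerivWithinAt ht
      ((hFd₂.clm_apply (hasFDerivAt_const ((0, 1) : ℝ × ℝ) _)).congr_of_eventuallyEq
        htime).hasFDerivWithinAt]
  simpa using (contDiffAt_uncurry hJ hF ht).isSymmSndFDerivAt
    (by simpa using ENat.LEInfty.out) (0, 1) (1, 0)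

theorem periodic_spaceDeriv {T : ℝ} (hper : Periodic (F · t) T) : Periodic (spaceDeriv F · t) T :=
  periodic_deriv_s12 hper

theorem periodic_timeDeriv {T : ℝ} (hJ : IsOpen J) (hper : ∀ s ∈ J, Periodic (F · s) T)
    (ht : t ∈ J) : Periodic (timeDeriv F · t) T := fun x =>
  EventuallyEq.deriv_eq <| by filter_upwards [hJ.mem_nhds ht] with s hs using hper s hs x

theorem hasDerivAt_integral_of_contDiffOn (hJ : IsOpen J)
    (hF : ContDiffOn ℝ ∞ (uncurry F) (univ ×ˢ J)) (ht : t ∈ J) (a b : ℝ) :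
    HasDerivAt (fun s => ∫ x in a..b, F x s) (∫ x in a..b, timeDeriv F x t) t := by
  have hF' := contDiffOn_timeDeriv hJ hF
  obtain ⟨δ, hδ, hball⟩ := Metric.nhds_basis_closedBall.mem_iff.1 (hJ.mem_nhds ht)
  obtain ⟨C, hC⟩ := (isCompact_uIcc.prod (isCompact_closedBall t δ)).exists_bound_of_continuousOn
    (hF'.continuousOn.mono (prod_mono (subset_univ (uIcc a b)) hball))
  refine (intervalIntegral.hasDerivAt_integral_of_dominated_loc_of_deriv_le
    (F := fun s x => F x s) (F' := fun s x => timeDeriv F x s) (bound := fun _ => C)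
    (Metric.closedBall_mem_nhds t hδ) ?_ ((contDiff_slice hF ht).continuous.intervalIntegrable _ _)
    (contDiff_slice hF' ht).continuous.aestronglyMeasurable
    (.of_forall fun x hx s hs => hC (x, s) ⟨uIoc_subset_uIcc hx, hs⟩) (by simp)
    (.of_forall fun x _ s hs => hasDerivAt_timeDeriv hJ hF (hball hs))).2
  filter_upwards [hJ.mem_nhds ht] with s hs
  exact (contDiff_slice hF hs).continuous.aestronglyMeasurable

theorem hasDerivAt_l2NormSq_spaceDeriv (hJ : IsOpen J)
    (hF : ContDiffOn ℝ ∞ (uncurry F) (univ ×ˢ J)) (hper : ∀ s ∈ J, Periodic (F · s) (2 * π))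
    (ht : t ∈ J) :
    HasDerivAt (fun s => l2NormSq (spaceDeriv F · s))
      (-2 * ∫ x in (0 : ℝ)..2 * π, spaceDeriv (spaceDeriv F) x t * timeDeriv F x t) t := by
  have hF₁ := contDiffOn_spaceDeriv hJ.uniqueDiffOn hF
  have hparts := integral_mul_deriv_eq_neg_of_periodic
    ((contDiff_slice hF₁ ht).of_le (by simp))
    ((contDiff_slice (contDiffOn_timeDeriv hJ hF) ht).of_le (by simp))
    (periodic_spaceDeriv (hper t ht)) (periodic_timeDeriv hJ hper ht)
  refine (hasDerivAt_integral_of_contDiffOn (F := fun x s => spaceDeriv F x s ^ 2) hJ (hF₁.pow 2)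
    ht 0 (2 * π)).congr_deriv ?_
  calc ∫ x in (0 : ℝ)..2 * π, timeDeriv (fun x s => spaceDeriv F x s ^ 2) x t
      = ∫ x in (0 : ℝ)..2 * π, 2 * (spaceDeriv F x t * spaceDeriv (timeDeriv F) x t) := by
        congr 1
        funext x
        rw [← timeDeriv_spaceDeriv_comm hJ hF ht]
        exact ((hasDerivAt_timeDeriv hJ hF₁ ht).fun_pow 2).deriv.trans (by ring)
    _ = 2 * -∫ x in (0 : ℝ)..2 * π, spaceDeriv (spaceDeriv F) x t * timeDeriv F x t := by
        rw [intervalIntegral.integral_const_mul]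
        exact congrArg (2 * ·) hparts
    _ = _ := by ring

theorem continuousOn_integral_Ici {a b t₀ : ℝ}
    (hF : ContinuousOn (uncurry F) (univ ×ˢ Ici t₀)) :
    ContinuousOn (fun t => ∫ x in a..b, F x t) (Ici t₀) := by
  have hext : Continuous fun t => ∫ x in a..b, F x (max t t₀) := by
    refine intervalIntegral.continuous_parametric_intervalIntegral_of_continuous'
      (f := fun t x => F x (max t t₀)) ?_ a b
    exact hF.comp_continuous (f := fun q : ℝ × ℝ => (q.2, max q.1 t₀)) (by fun_prop)
      fun _ => ⟨mem_univ _, mem_Ici.2 (le_max_right _ _)⟩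
  refine hext.continuousOn.congr fun t ht => ?_
  simp only [max_eq_left (mem_Ici.1 ht)]

end Families

section ClosedCurves

/-- The right-hand side of the rescaled curve shortening equation `∂k/∂τ = curvatureVelocity p k`,
where `k` is a function of the tangent angle. -/
noncomputable def curvatureVelocity (p : ℝ) (k : ℝ → ℝ) (θ : ℝ) : ℝ :=
  p * k θ ^ (1 + 1 / p) * deriv (deriv k) θ + p * k θ ^ (2 + 1 / p) - p * k θ

/-- The condition that the convex curve whose curvature, as a function of the tangent angle, is
`κ = k ^ (1 / p)` closes up. It amounts to `∫ exp (i θ) / κ dθ = 0`, which is encoded by the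
vanishing of the projections of this integral to all directions `β`. -/
def ClosesUp (p : ℝ) (k : ℝ → ℝ) : Prop :=
  ∀ β, ∫ θ in (0 : ℝ)..2 * π, k θ ^ (-(1 / p)) * cos (θ - β) = 0

theorem periodic_cos_sub (β : ℝ) : Periodic (fun θ => cos (θ - β)) (2 * π) :=
  cos_periodic.sub_const β

theorem deriv_cos_sub (β θ : ℝ) : deriv (fun θ => cos (θ - β)) θ = cos (θ - (β - π / 2)) := by
  rw [← sub_add, cos_add_pi_div_two, deriv_comp_sub_const (f := cos), Real.deriv_cos]

theorem sq_integral_mul_le_of_integral_mul_mul_eq_zero {w f g : ℝ → ℝ} {a b ε : ℝ} (hab : a ≤ b)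
    (hw : Continuous w) (hf : Continuous f) (hg : Continuous g) (hε : ∀ x, |w x - 1| ≤ ε)
    (hzero : ∫ x in a..b, w x * f x * g x = 0) :
    (∫ x in a..b, f x * g x) ^ 2 ≤ ε ^ 2 * (∫ x in a..b, f x ^ 2) * ∫ x in a..b, g x ^ 2 := by
  have hsub : ∫ x in a..b, (1 - w x) * f x * g x = ∫ x in a..b, f x * g x := by
    rw [← sub_zero (∫ x in a..b, f x * g x), ← hzero, ← intervalIntegral.integral_sub]
    · congr 1; funext x; ring
    all_goals exact Continuous.intervalIntegrable (by fun_prop) _ _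
  have hle : ∫ x in a..b, ((1 - w x) * f x) ^ 2 ≤ ε ^ 2 * ∫ x in a..b, f x ^ 2 := by
    rw [← intervalIntegral.integral_const_mul]
    refine intervalIntegral.integral_mono_on hab (Continuous.intervalIntegrable (by fun_prop) _ _)
      (Continuous.intervalIntegrable (by fun_prop) _ _) fun x _ => ?_
    rw [mul_pow, ← neg_sub, neg_sq, ← sq_abs (w x - 1)]
    gcongr
    exact hε x
  rw [← hsub]
  exact (sq_integral_mul_le hab (by fun_prop) hg).trans <| mul_le_mul_of_nonneg_right hle <|
    intervalIntegral.integral_nonneg hab fun _ _ => sq_nonneg _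

variable {p ε : ℝ} {k : ℝ → ℝ}

theorem hasDerivAt_rpow_comp (hpos : ∀ θ, 0 < k θ) (hk : ContDiff ℝ 1 k) (c θ : ℝ) :
    HasDerivAt (fun θ => k θ ^ c) (c * (k θ ^ (c - 1) * deriv k θ)) θ :=
  ((hk.differentiable_one θ).hasDerivAt.rpow_const (.inl (hpos θ).ne')).congr_deriv (by ring)

theorem ClosesUp.integral_rpow_mul_deriv_mul_cos_eq_zero (hclosed : ClosesUp p k) (hp : p ≠ 0)
    (hpos : ∀ θ, 0 < k θ) (hk : ContDiff ℝ 1 k) (hkT : Periodic k (2 * π)) (β : ℝ) :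
    ∫ θ in (0 : ℝ)..2 * π, k θ ^ (-(1 + 1 / p)) * deriv k θ * cos (θ - β) = 0 := by
  have hparts := integral_mul_deriv_eq_neg_of_periodic
    (u := fun θ => cos (θ - β)) (v := fun θ => k θ ^ (-(1 / p))) (by fun_prop)
    (hk.rpow_const_of_ne fun θ => (hpos θ).ne') (periodic_cos_sub β) (hkT.comp (· ^ (-(1 / p))))
  have hneg : -∫ θ in (0 : ℝ)..2 * π, deriv (fun θ => cos (θ - β)) θ * k θ ^ (-(1 / p)) = 0 := by
    simpa only [deriv_cos_sub, mul_comm, neg_eq_zero] using hclosed (β - π / 2)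
  have hscale : -(1 / p) *
      ∫ θ in (0 : ℝ)..2 * π, k θ ^ (-(1 + 1 / p)) * deriv k θ * cos (θ - β) = 0 := by
    refine Eq.trans ?_ (hparts.trans hneg)
    rw [← intervalIntegral.integral_const_mul]
    congr 1
    funext θ
    rw [(hasDerivAt_rpow_comp hpos hk _ θ).deriv, show -(1 / p) - 1 = -(1 + 1 / p) by ring]
    ring
  exact (mul_eq_zero.1 hscale).resolve_left (by simpa using hp)

theorem ClosesUp.mul_l2NormSq_deriv_le (hclosed : ClosesUp p k) (hp : p ≠ 0) (hpos : ∀ θ, 0 < k θ)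
    (hk : ContDiff ℝ 2 k) (hkT : Periodic k (2 * π)) (hε : ∀ θ, |k θ ^ (-(1 + 1 / p)) - 1| ≤ ε) :
    (4 - 6 * ε ^ 2) * l2NormSq (deriv k) ≤ l2NormSq (deriv (deriv k)) := by
  have hk₁ : ContDiff ℝ 1 k := hk.of_le one_le_two
  have hmode (β : ℝ) := sq_integral_mul_le_of_integral_mul_mul_eq_zero two_pi_pos.le
    (hk.continuous.rpow_const fun θ => .inl (hpos θ).ne') hk₁.continuous_deriv_one (by fun_prop) hε
    (hclosed.integral_rpow_mul_deriv_mul_cos_eq_zero hp hpos hk₁ hkT β)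
  have hcos : (∫ θ in (0 : ℝ)..2 * π, deriv k θ * cos θ) ^ 2 ≤
      ε ^ 2 * l2NormSq (deriv k) * π := by
    simpa [integral_cos_sq, l2NormSq] using hmode 0
  have hsin : (∫ θ in (0 : ℝ)..2 * π, deriv k θ * sin θ) ^ 2 ≤
      ε ^ 2 * l2NormSq (deriv k) * π := by
    simpa [cos_sub_pi_div_two, integral_sin_sq, l2NormSq] using hmode (π / 2)
  calc (4 - 6 * ε ^ 2) * l2NormSq (deriv k)
      = 4 * l2NormSq (deriv k) - 3 / π *
          (ε ^ 2 * l2NormSq (deriv k) * π + ε ^ 2 * l2NormSq (deriv k) * π) := by field_simp; ring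
    _ ≤ 4 * l2NormSq (deriv k) - 3 / π * ((∫ θ in (0 : ℝ)..2 * π, deriv k θ * cos θ) ^ 2 +
          (∫ θ in (0 : ℝ)..2 * π, deriv k θ * sin θ) ^ 2) := by gcongr
    _ ≤ l2NormSq (deriv (deriv k)) :=
        four_mul_integral_sq_sub_le_integral_sq_deriv hk.deriv' (periodic_deriv_s12 hkT)
          (integral_deriv_eq_zero_of_periodic hk₁ hkT)

theorem integral_deriv_deriv_mul_curvatureVelocity (hp : p ≠ 0) (hpos : ∀ θ, 0 < k θ)
    (hk : ContDiff ℝ 2 k) (hkT : Periodic k (2 * π)) :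
    ∫ θ in (0 : ℝ)..2 * π, deriv (deriv k) θ * curvatureVelocity p k θ =
      ∫ θ in (0 : ℝ)..2 * π, (p * k θ ^ (1 + 1 / p) * deriv (deriv k) θ ^ 2 -
        ((2 * p + 1) * k θ ^ (1 + 1 / p) - p) * deriv k θ ^ 2) := by
  have hk₁ : ContDiff ℝ 1 k := hk.of_le one_le_two
  have hpow (c : ℝ) : ContDiff ℝ 1 fun θ => k θ ^ c :=
    hk₁.rpow_const_of_ne fun θ => (hpos θ).ne'
  have hpowc (c : ℝ) : Continuous fun θ => k θ ^ c := (hpow c).continuous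
  have hderiv (θ : ℝ) : deriv (fun θ => p * k θ ^ (2 + 1 / p) - p * k θ) θ =
      ((2 * p + 1) * k θ ^ (1 + 1 / p) - p) * deriv k θ := by
    rw [(((hasDerivAt_rpow_comp hpos hk₁ _ θ).const_mul p).fun_sub
      ((hk₁.differentiable_one θ).hasDerivAt.const_mul p)).deriv,
      show 2 + 1 / p - 1 = 1 + 1 / p by ring]
    field_simp
  have hparts := integral_mul_deriv_eq_neg_of_periodic
    (u := fun θ => p * k θ ^ (2 + 1 / p) - p * k θ) (v := deriv k)
    ((contDiff_const.mul (hpow _)).sub (contDiff_const.mul hk₁)) hk.deriv'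
    (hkT.comp fun y => p * y ^ (2 + 1 / p) - p * y) (periodic_deriv_s12 hkT)
  simp only [hderiv] at hparts
  calc ∫ θ in (0 : ℝ)..2 * π, deriv (deriv k) θ * curvatureVelocity p k θ
      = (∫ θ in (0 : ℝ)..2 * π, p * k θ ^ (1 + 1 / p) * deriv (deriv k) θ ^ 2) +
          ∫ θ in (0 : ℝ)..2 * π, (p * k θ ^ (2 + 1 / p) - p * k θ) * deriv (deriv k) θ := by
        rw [← intervalIntegral.integral_add]
        · congr 1; funext θ; rw [curvatureVelocity]; ring
        all_goals exact Continuous.intervalIntegrable (by fun_prop) _ _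
    _ = _ := by
        rw [hparts, ← sub_eq_add_neg, ← intervalIntegral.integral_sub]
        · congr 1; funext θ; ring
        all_goals exact Continuous.intervalIntegrable (by fun_prop) _ _

theorem sub_mul_l2NormSq_le_integral_deriv_deriv_mul_curvatureVelocity (hp : 0 < p)
    (hpos : ∀ θ, 0 < k θ) (hk : ContDiff ℝ 2 k) (hkT : Periodic k (2 * π))
    (hε : ∀ θ, |k θ ^ (1 + 1 / p) - 1| ≤ ε) :
    p * (1 - ε) * l2NormSq (deriv (deriv k)) -
        ((2 * p + 1) * (1 + ε) - p) * l2NormSq (deriv k) ≤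
      ∫ θ in (0 : ℝ)..2 * π, deriv (deriv k) θ * curvatureVelocity p k θ := by
  have hk'c : Continuous (deriv k) := (hk.of_le one_le_two).continuous_deriv_one
  have hpow : Continuous fun θ => k θ ^ (1 + 1 / p) :=
    hk.continuous.rpow_const fun θ => .inl (hpos θ).ne'
  rw [integral_deriv_deriv_mul_curvatureVelocity hp.ne' hpos hk hkT, l2NormSq, l2NormSq,
    ← intervalIntegral.integral_const_mul, ← intervalIntegral.integral_const_mul,
    ← intervalIntegral.integral_sub]
  · refine intervalIntegral.integral_mono_on two_pi_pos.le
      (Continuous.intervalIntegrable (by fun_prop) _ _)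
      (Continuous.intervalIntegrable (by fun_prop) _ _) fun θ _ => ?_
    obtain ⟨hlow, hupp⟩ := abs_le.1 (hε θ)
    gcongr <;> linarith
  all_goals exact Continuous.intervalIntegrable (by fun_prop) _ _

theorem ClosesUp.mul_l2NormSq_le_integral_deriv_deriv_mul_curvatureVelocity
    (hclosed : ClosesUp p k) (hp : 0 < p) (hpos : ∀ θ, 0 < k θ) (hk : ContDiff ℝ 2 k)
    (hkT : Periodic k (2 * π)) (hε₁ : ε ≤ 1) (hε : ∀ θ, |k θ ^ (1 + 1 / p) - 1| ≤ ε)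
    (hε' : ∀ θ, |k θ ^ (-(1 + 1 / p)) - 1| ≤ ε) :
    (p * (1 - ε) * (4 - 6 * ε ^ 2) - ((2 * p + 1) * (1 + ε) - p)) * l2NormSq (deriv k) ≤
      ∫ θ in (0 : ℝ)..2 * π, deriv (deriv k) θ * curvatureVelocity p k θ := by
  have hwirtinger := mul_le_mul_of_nonneg_left
    (hclosed.mul_l2NormSq_deriv_le hp.ne' hpos hk hkT hε') (mul_nonneg hp.le (sub_nonneg.2 hε₁))
  linarith [sub_mul_l2NormSq_le_integral_deriv_deriv_mul_curvatureVelocity hp hpos hk hkT hε]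

theorem deriv_curvatureVelocity (hp : p ≠ 0) (hpos : ∀ θ, 0 < k θ) (hk : ContDiff ℝ 3 k) (θ : ℝ) :
    deriv (curvatureVelocity p k) θ = p * k θ ^ (1 + 1 / p) * deriv (deriv (deriv k)) θ +
      (p + 1) * k θ ^ (1 / p) * (deriv k θ * deriv (deriv k) θ) +
      ((2 * p + 1) * k θ ^ (1 + 1 / p) - p) * deriv k θ := by
  have hk₁ : ContDiff ℝ 1 k := hk.of_le (by norm_num)
  have hk'' : ContDiff ℝ 1 (deriv (deriv k)) := ContDiff.deriv' (ContDiff.deriv' hk)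
  refine ((((hasDerivAt_rpow_comp hpos hk₁ (1 + 1 / p) θ).const_mul p).fun_mul
    (hk''.differentiable_one θ).hasDerivAt).fun_add
      ((hasDerivAt_rpow_comp hpos hk₁ (2 + 1 / p) θ).const_mul p) |>.fun_sub
      ((hk₁.differentiable_one θ).hasDerivAt.const_mul p)).deriv.trans ?_
  rw [add_sub_cancel_left, show 2 + 1 / p - 1 = 1 + 1 / p by ring]
  field_simp
  ring

theorem sub_le_deriv_mul_deriv_curvatureVelocity (hp : 0 < p) (hpos : ∀ θ, 0 < k θ)
    (hk : ContDiff ℝ 3 k) {θ : ℝ} (hε : |k θ ^ (1 + 1 / p) - 1| ≤ 1 / 2)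
    (hle : k θ ^ (1 / p) ≤ 2) :
    p / 4 * deriv (deriv (deriv k)) θ ^ 2 -
        8 * (p + 1) ^ 2 / p * ((deriv k θ * deriv (deriv k) θ) ^ 2 + deriv k θ ^ 2) ≤
      deriv (deriv (deriv k)) θ * deriv (curvatureVelocity p k) θ := by
  rw [deriv_curvatureVelocity hp.ne' hpos hk]
  set z := deriv (deriv (deriv k)) θ
  -- Young's inequality absorbs each of the two lower-order terms at the cost of `p / 8 * z ^ 2`.
  have hyoung {c : ℝ} (hc : |c| ≤ 2 * (p + 1)) (w : ℝ) :
      -(p / 8 * z ^ 2 + 8 * (p + 1) ^ 2 / p * w ^ 2) ≤ z * (c * w) := by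
    have hsq : c ^ 2 ≤ (2 * (p + 1)) ^ 2 := sq_le_sq' (abs_le.1 hc).1 (abs_le.1 hc).2
    calc -(p / 8 * z ^ 2 + 8 * (p + 1) ^ 2 / p * w ^ 2)
        = -(p / 8 * z ^ 2 + 2 / p * ((2 * (p + 1)) ^ 2 * w ^ 2)) := by ring
      _ ≤ -(p / 8 * z ^ 2 + 2 / p * (c ^ 2 * w ^ 2)) := by gcongr
      _ = z * (c * w) - p / 8 * (z + 4 / p * (c * w)) ^ 2 := by field_simp; ring
      _ ≤ z * (c * w) := sub_le_self _ (by positivity)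
  obtain ⟨hlow, hupp⟩ := abs_le.1 hε
  have hpos' : 0 < k θ ^ (1 / p) := rpow_pos_of_pos (hpos θ) _
  have hmixed := hyoung (c := (p + 1) * k θ ^ (1 / p))
    (by rw [abs_of_pos (by positivity)]; nlinarith) (deriv k θ * deriv (deriv k) θ)
  have hfirst := hyoung (c := (2 * p + 1) * k θ ^ (1 + 1 / p) - p)
    (by rw [abs_le]; constructor <;> nlinarith) (deriv k θ)
  have hlead : p * (1 / 2) * z ^ 2 ≤ p * k θ ^ (1 + 1 / p) * z ^ 2 := by gcongr; linarith
  linarith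

theorem integral_sq_deriv_mul_deriv_deriv_le (hk : ContDiff ℝ 3 k) (hkT : Periodic k (2 * π)) :
    ∫ θ in (0 : ℝ)..2 * π, (deriv k θ * deriv (deriv k) θ) ^ 2 ≤
      2 * π * (l2NormSq (deriv k) * l2NormSq (deriv (deriv (deriv k)))) := by
  have hk₂ : ContDiff ℝ 2 k := hk.of_le (by norm_num)
  have hk'c : Continuous (deriv k) := (hk₂.of_le one_le_two).continuous_deriv_one
  calc ∫ θ in (0 : ℝ)..2 * π, (deriv k θ * deriv (deriv k) θ) ^ 2
      ≤ ∫ θ in (0 : ℝ)..2 * π, 2 * π * l2NormSq (deriv (deriv k)) * deriv (deriv k) θ ^ 2 := by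
        refine intervalIntegral.integral_mono_on two_pi_pos.le
          (Continuous.intervalIntegrable (by fun_prop) _ _)
          (Continuous.intervalIntegrable (by fun_prop) _ _) fun θ hθ => ?_
        rw [mul_pow]
        gcongr
        exact sq_deriv_le_of_periodic two_pi_pos hk₂ hkT hθ
    _ = 2 * π * l2NormSq (deriv (deriv k)) ^ 2 := by
        rw [intervalIntegral.integral_const_mul, l2NormSq]; ring
    _ ≤ 2 * π * (l2NormSq (deriv k) * l2NormSq (deriv (deriv (deriv k)))) := by
        gcongr
        exact sq_integral_sq_deriv_le_of_periodic two_pi_pos.le (ContDiff.deriv' hk)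
          (periodic_deriv_s12 hkT)

theorem sub_le_integral_deriv_mul_deriv_curvatureVelocity (hp : 0 < p) (hpos : ∀ θ, 0 < k θ)
    (hk : ContDiff ℝ 3 k) (hε : ∀ θ, |k θ ^ (1 + 1 / p) - 1| ≤ 1 / 2)
    (hle : ∀ θ, k θ ^ (1 / p) ≤ 2) :
    p / 4 * l2NormSq (deriv (deriv (deriv k))) - 8 * (p + 1) ^ 2 / p *
        ((∫ θ in (0 : ℝ)..2 * π, (deriv k θ * deriv (deriv k) θ) ^ 2) + l2NormSq (deriv k)) ≤
      ∫ θ in (0 : ℝ)..2 * π, deriv (deriv (deriv k)) θ * deriv (curvatureVelocity p k) θ := by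
  have hk'' : ContDiff ℝ 1 (deriv (deriv k)) := ContDiff.deriv' (ContDiff.deriv' hk)
  have hk'c : Continuous (deriv k) := (hk.of_le (by norm_num)).continuous_deriv_one
  have hVc : Continuous (deriv (curvatureVelocity p k)) := by
    have hpow (c : ℝ) : Continuous fun θ => k θ ^ c :=
      hk.continuous.rpow_const fun θ => .inl (hpos θ).ne'
    rw [funext (deriv_curvatureVelocity hp.ne' hpos hk)]
    fun_prop
  rw [l2NormSq, l2NormSq, ← intervalIntegral.integral_add, ← intervalIntegral.integral_const_mul,
    ← intervalIntegral.integral_const_mul, ← intervalIntegral.integral_sub]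
  · exact intervalIntegral.integral_mono_on two_pi_pos.le
      (Continuous.intervalIntegrable (by fun_prop) _ _)
      (Continuous.intervalIntegrable (by fun_prop) _ _) fun θ _ =>
        sub_le_deriv_mul_deriv_curvatureVelocity hp hpos hk (hε θ) (hle θ)
  all_goals exact Continuous.intervalIntegrable (by fun_prop) _ _

theorem mul_l2NormSq_deriv_three_le (hp : 0 < p) (hpos : ∀ θ, 0 < k θ) (hk : ContDiff ℝ 3 k)
    (hkT : Periodic k (2 * π)) (hε : ∀ θ, |k θ ^ (1 + 1 / p) - 1| ≤ 1 / 2)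
    (hle : ∀ θ, k θ ^ (1 / p) ≤ 2) (hsmall : l2NormSq (deriv k) ≤ p ^ 2 / (128 * π * (p + 1) ^ 2)) :
    p / 8 * l2NormSq (deriv (deriv (deriv k))) ≤
      (∫ θ in (0 : ℝ)..2 * π, deriv (deriv (deriv k)) θ * deriv (curvatureVelocity p k) θ) +
        8 * (p + 1) ^ 2 / p * l2NormSq (deriv k) := by
  have hD : 0 ≤ l2NormSq (deriv (deriv (deriv k))) := l2NormSq_nonneg _
  have habsorb : 8 * (p + 1) ^ 2 / p *
      (∫ θ in (0 : ℝ)..2 * π, (deriv k θ * deriv (deriv k) θ) ^ 2) ≤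
        p / 8 * l2NormSq (deriv (deriv (deriv k))) := by
    calc _ ≤ 8 * (p + 1) ^ 2 / p * (2 * π * (p ^ 2 / (128 * π * (p + 1) ^ 2) *
          l2NormSq (deriv (deriv (deriv k))))) := by
          grw [integral_sq_deriv_mul_deriv_deriv_le hk hkT, hsmall]
      _ = p / 8 * l2NormSq (deriv (deriv (deriv k))) := by field_simp; ring
  linarith [sub_le_integral_deriv_mul_deriv_curvatureVelocity hp hpos hk hε hle]

theorem mul_l2NormSq_deriv_deriv_le (hp : 0 < p) (hk : ContDiff ℝ 3 k) (hkT : Periodic k (2 * π))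
    (r : ℝ) :
    r * l2NormSq (deriv (deriv k)) ≤
      p / 8 * l2NormSq (deriv (deriv (deriv k))) + 2 * r ^ 2 / p * l2NormSq (deriv k) := by
  set Q := l2NormSq (deriv k)
  set D := l2NormSq (deriv (deriv (deriv k)))
  have hQ : 0 ≤ Q := l2NormSq_nonneg _
  have hD : 0 ≤ D := l2NormSq_nonneg _
  have hinterp : l2NormSq (deriv (deriv k)) ^ 2 ≤ Q * D :=
    sq_integral_sq_deriv_le_of_periodic two_pi_pos.le (ContDiff.deriv' hk) (periodic_deriv_s12 hkT)
  refine le_of_abs_le (abs_le_of_sq_le_sq ?_ (by positivity))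
  calc (r * l2NormSq (deriv (deriv k))) ^ 2 ≤ r ^ 2 * (Q * D) := by rw [mul_pow]; gcongr
    _ = (p / 8 * D + 2 * r ^ 2 / p * Q) ^ 2 - (p / 8 * D - 2 * r ^ 2 / p * Q) ^ 2 := by
        field_simp; ring
    _ ≤ (p / 8 * D + 2 * r ^ 2 / p * Q) ^ 2 := sub_le_self _ (sq_nonneg _)

theorem mul_l2NormSq_le_integral_deriv_mul_deriv_curvatureVelocity_add (hp : 0 < p)
    (hpos : ∀ θ, 0 < k θ) (hk : ContDiff ℝ 3 k) (hkT : Periodic k (2 * π))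
    (hε : ∀ θ, |k θ ^ (1 + 1 / p) - 1| ≤ 1 / 2) (hle : ∀ θ, k θ ^ (1 / p) ≤ 2)
    (hsmall : l2NormSq (deriv k) ≤ p ^ 2 / (128 * π * (p + 1) ^ 2)) (r : ℝ) :
    r * l2NormSq (deriv (deriv k)) ≤
      (∫ θ in (0 : ℝ)..2 * π, deriv (deriv (deriv k)) θ * deriv (curvatureVelocity p k) θ) +
        (2 * r ^ 2 / p + 8 * (p + 1) ^ 2 / p) * l2NormSq (deriv k) := by
  linarith [mul_l2NormSq_deriv_deriv_le hp hk hkT r,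
    mul_l2NormSq_deriv_three_le hp hpos hk hkT hε hle hsmall]

theorem integral_deriv_deriv_add_self_mul_cos_eq_zero (hk : ContDiff ℝ 2 k)
    (hkT : Periodic k (2 * π)) (β : ℝ) :
    ∫ θ in (0 : ℝ)..2 * π, (deriv (deriv k) θ + k θ) * cos (θ - β) = 0 := by
  have hk₁ : ContDiff ℝ 1 k := hk.of_le one_le_two
  have hk' : ContDiff ℝ 1 (deriv k) := hk.deriv'
  refine Eq.trans ?_ (integral_deriv_eq_zero_of_periodic
    (f := fun θ => deriv k θ * cos (θ - β) + k θ * sin (θ - β)) (by fun_prop)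
    (((periodic_deriv_s12 hkT).mul (cos_periodic.sub_const β)).add
      (hkT.mul (sin_periodic.sub_const β))))
  congr 1
  funext θ
  have hsub : HasDerivAt (fun θ => θ - β) 1 θ := (hasDerivAt_id' θ).sub_const β
  exact (((hk'.differentiable_one θ).hasDerivAt.fun_mul hsub.cos).fun_add
    ((hk₁.differentiable_one θ).hasDerivAt.fun_mul hsub.sin)).congr_deriv (by ring) |>.deriv.symm

theorem rpow_mul_curvatureVelocity (hp : p ≠ 0) {θ : ℝ} (hpos : 0 < k θ) :
    -(1 / p) * (k θ ^ (-(1 / p) - 1) * curvatureVelocity p k θ) =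
      k θ ^ (-(1 / p)) - (deriv (deriv k) θ + k θ) := by
  have h₁ : k θ ^ (-(1 / p) - 1) * k θ ^ (1 + 1 / p) = 1 := by
    rw [← rpow_add hpos, ← rpow_zero (k θ)]; ring_nf
  have h₂ : k θ ^ (-(1 / p) - 1) * k θ ^ (2 + 1 / p) = k θ := by
    rw [← rpow_add hpos, show -(1 / p) - 1 + (2 + 1 / p) = 1 by ring, rpow_one]
  have h₃ : k θ ^ (-(1 / p) - 1) * k θ = k θ ^ (-(1 / p)) := by
    rw [← rpow_add_one hpos.ne', sub_add_cancel]
  calc _ = k θ ^ (-(1 / p) - 1) * k θ - (k θ ^ (-(1 / p) - 1) * k θ ^ (1 + 1 / p) *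
          deriv (deriv k) θ + k θ ^ (-(1 / p) - 1) * k θ ^ (2 + 1 / p)) := by
        rw [curvatureVelocity]; field_simp; ring
    _ = _ := by rw [h₁, h₂, h₃, one_mul]

end ClosedCurves

section RescaledFlow

/-- `K θ τ` is, as a function of the tangent angle `θ` and the time `τ`, a positive solution of the
rescaled curve shortening equation at positive times, smooth up to time `0` and `2π`-periodic. -/
structure IsRescaledFlow_s12 (p : ℝ) (K : ℝ → ℝ → ℝ) : Prop where
  contDiffOn : ContDiffOn ℝ ∞ (uncurry K) (univ ×ˢ Ici 0)
  periodic {τ : ℝ} (hτ : 0 < τ) : Periodic (K · τ) (2 * π)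
  pos {τ : ℝ} (hτ : 0 < τ) (θ : ℝ) : 0 < K θ τ
  timeDeriv_eq {τ : ℝ} (hτ : 0 < τ) (θ : ℝ) : timeDeriv K θ τ = curvatureVelocity p (K · τ) θ

theorem eventually_abs_rpow_sub_one_le {X ι : Type*} {l : Filter ι} {f : ι → X → ℝ}
    (hf : TendstoUniformly f (fun _ => 1) l) (c : ℝ) {ε : ℝ} (hε : 0 < ε) :
    ∀ᶠ i in l, ∀ x, |f i x ^ c - 1| ≤ ε := by
  have hcont : ContinuousAt (fun y : ℝ => y ^ c) 1 := continuousAt_rpow_const _ _ (.inl one_ne_zero)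
  obtain ⟨δ, hδ, hball⟩ := Metric.continuousAt_iff.1 hcont ε hε
  filter_upwards [Metric.tendstoUniformly_iff.1 hf δ hδ] with i hi x
  simpa [Real.dist_eq] using (hball (by rw [dist_comm]; exact hi x)).le

theorem exists_pos_le_one_lt_rate {p r : ℝ} (hr : r < 3 * p - 1) :
    ∃ ε, 0 < ε ∧ ε ≤ 1 ∧ r < p * (1 - ε) * (4 - 6 * ε ^ 2) - ((2 * p + 1) * (1 + ε) - p) := by
  have hcont : Continuous fun ε : ℝ =>
      p * (1 - ε) * (4 - 6 * ε ^ 2) - ((2 * p + 1) * (1 + ε) - p) := by fun_prop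
  have hlt : ∀ᶠ ε in 𝓝[>] (0 : ℝ),
      r < p * (1 - ε) * (4 - 6 * ε ^ 2) - ((2 * p + 1) * (1 + ε) - p) :=
    nhdsWithin_le_nhds <| hcont.continuousAt.eventually_const_lt (by linarith)
  obtain ⟨ε, hε, hε₁, hε₀⟩ := (hlt.and (Ioc_mem_nhdsGT one_pos)).exists
  exact ⟨ε, hε₁, hε₀, hε⟩

namespace IsRescaledFlow_s12

variable {p r τ : ℝ} {K : ℝ → ℝ → ℝ}

theorem contDiffOn_Ioi (hK : IsRescaledFlow_s12 p K) :
    ContDiffOn ℝ ∞ (uncurry K) (univ ×ˢ Ioi 0) :=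
  hK.contDiffOn.mono (prod_mono le_rfl Ioi_subset_Ici_self)

theorem contDiff_s12 (hK : IsRescaledFlow_s12 p K) (hτ : 0 < τ) : ContDiff ℝ ∞ (K · τ) :=
  contDiff_slice hK.contDiffOn_Ioi hτ

theorem hasDerivAt_l2NormSq_deriv (hK : IsRescaledFlow_s12 p K) (hτ : 0 < τ) :
    HasDerivAt (fun τ => l2NormSq (deriv (K · τ)))
      (-2 * ∫ θ in (0 : ℝ)..2 * π,
        deriv (deriv (K · τ)) θ * curvatureVelocity p (K · τ) θ) τ := by
  simp only [← hK.timeDeriv_eq hτ]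
  exact hasDerivAt_l2NormSq_spaceDeriv isOpen_Ioi hK.contDiffOn_Ioi
    (fun _ hs => hK.periodic hs) hτ

theorem hasDerivAt_l2NormSq_deriv_deriv (hK : IsRescaledFlow_s12 p K) (hτ : 0 < τ) :
    HasDerivAt (fun τ => l2NormSq (deriv (deriv (K · τ))))
      (-2 * ∫ θ in (0 : ℝ)..2 * π,
        deriv (deriv (deriv (K · τ))) θ * deriv (curvatureVelocity p (K · τ)) θ) τ := by
  have hcomm (θ : ℝ) : timeDeriv (spaceDeriv K) θ τ = deriv (curvatureVelocity p (K · τ)) θ := by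
    rw [timeDeriv_spaceDeriv_comm isOpen_Ioi hK.contDiffOn_Ioi hτ, spaceDeriv,
      funext (hK.timeDeriv_eq hτ)]
  simp only [← hcomm]
  exact hasDerivAt_l2NormSq_spaceDeriv isOpen_Ioi
    (contDiffOn_spaceDeriv isOpen_Ioi.uniqueDiffOn hK.contDiffOn_Ioi)
    (fun _ hs => periodic_spaceDeriv (hK.periodic hs)) hτ

theorem hasDerivAt_integral_rpow_mul_cos (hK : IsRescaledFlow_s12 p K) (hp : p ≠ 0) (hτ : 0 < τ)
    (β : ℝ) :
    HasDerivAt (fun τ => ∫ θ in (0 : ℝ)..2 * π, K θ τ ^ (-(1 / p)) * cos (θ - β))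
      (∫ θ in (0 : ℝ)..2 * π, K θ τ ^ (-(1 / p)) * cos (θ - β)) τ := by
  have hsmooth : ContDiffOn ℝ ∞ (uncurry fun θ τ => K θ τ ^ (-(1 / p)) * cos (θ - β))
      (univ ×ˢ Ioi 0) :=
    (hK.contDiffOn_Ioi.rpow_const_of_ne fun q hq => (hK.pos hq.2 q.1).ne').mul (by fun_prop)
  have hk₂ : ContDiff ℝ 2 (K · τ) := (hK.contDiff_s12 hτ).of_le ENat.LEInfty.out
  have hk : Continuous (K · τ) := hk₂.continuous
  have hpow : Continuous fun θ => K θ τ ^ (-(1 / p)) :=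
    hk.rpow_const fun θ => .inl (hK.pos hτ θ).ne'
  refine (hasDerivAt_integral_of_contDiffOn isOpen_Ioi hsmooth hτ 0 (2 * π)).congr_deriv ?_
  calc ∫ θ in (0 : ℝ)..2 * π, timeDeriv (fun θ τ => K θ τ ^ (-(1 / p)) * cos (θ - β)) θ τ
      = ∫ θ in (0 : ℝ)..2 * π, (K θ τ ^ (-(1 / p)) * cos (θ - β) -
          (deriv (deriv (K · τ)) θ + K θ τ) * cos (θ - β)) := by
        congr 1
        funext θ
        rw [← sub_mul, ← rpow_mul_curvatureVelocity hp (k := (K · τ)) (hK.pos hτ θ),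
          ← hK.timeDeriv_eq hτ]
        exact (((hasDerivAt_timeDeriv isOpen_Ioi hK.contDiffOn_Ioi hτ).rpow_const
          (.inl (hK.pos hτ θ).ne')).mul_const _).deriv.trans (by ring)
    _ = _ := by
        rw [intervalIntegral.integral_sub,
          integral_deriv_deriv_add_self_mul_cos_eq_zero hk₂ (hK.periodic hτ), sub_zero]
        all_goals exact Continuous.intervalIntegrable (by fun_prop) _ _

theorem closesUp (hK : IsRescaledFlow_s12 p K) (hp : p ≠ 0)
    (hconv : TendstoUniformly (fun τ θ => K θ τ) (fun _ => 1) atTop) (hτ : 0 < τ) :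
    ClosesUp p (K · τ) := fun β => by
  refine eq_zero_of_hasDerivAt_mul_self_of_bounded one_pos (C := 2 * |2 * π - 0|)
    (f := fun τ => ∫ θ in (0 : ℝ)..2 * π, K θ τ ^ (-(1 / p)) * cos (θ - β))
    (fun s hs => by simpa using hK.hasDerivAt_integral_rpow_mul_cos hp (hτ.trans_le hs) β) ?_
  filter_upwards [eventually_abs_rpow_sub_one_le hconv (-(1 / p)) one_pos] with s hs
  refine intervalIntegral.norm_integral_le_of_norm_le_const (E := ℝ) fun θ _ => ?_
  have hle : |K θ s ^ (-(1 / p))| ≤ 2 := by grind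
  rw [norm_mul]
  exact (mul_le_of_le_one_right (norm_nonneg _) (abs_cos_le_one _)).trans hle

theorem eventually_mul_l2NormSq_deriv_le (hK : IsRescaledFlow_s12 p K) (hp : 0 < p)
    (hconv : TendstoUniformly (fun τ θ => K θ τ) (fun _ => 1) atTop) (hr : r < 3 * p - 1) :
    ∀ᶠ τ in atTop, r * l2NormSq (deriv (K · τ)) ≤
      ∫ θ in (0 : ℝ)..2 * π, deriv (deriv (K · τ)) θ * curvatureVelocity p (K · τ) θ := by
  obtain ⟨ε, hε₀, hε₁, hrate⟩ := exists_pos_le_one_lt_rate hr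
  filter_upwards [eventually_abs_rpow_sub_one_le hconv (1 + 1 / p) hε₀,
    eventually_abs_rpow_sub_one_le hconv (-(1 + 1 / p)) hε₀, eventually_gt_atTop 0]
    with τ hε hε' hτ
  exact (mul_le_mul_of_nonneg_right hrate.le (l2NormSq_nonneg _)).trans <|
    (hK.closesUp hp.ne' hconv hτ).mul_l2NormSq_le_integral_deriv_deriv_mul_curvatureVelocity hp
      (hK.pos hτ) ((hK.contDiff_s12 hτ).of_le ENat.LEInfty.out) (hK.periodic hτ) hε₁ hε hε'

theorem tendsto_l2NormSq_deriv (hK : IsRescaledFlow_s12 p K) (hp : 1 / 3 < p)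
    (hconv : TendstoUniformly (fun τ θ => K θ τ) (fun _ => 1) atTop) :
    Tendsto (fun τ => l2NormSq (deriv (K · τ))) atTop (𝓝 0) := by
  obtain ⟨r, hr₀, hr⟩ : ∃ r, 0 < r ∧ r < 3 * p - 1 := exists_between (by linarith)
  obtain ⟨C, hC⟩ := exists_eventually_le_mul_exp (c := -(2 * r))
    ((eventually_gt_atTop 0).mono fun τ hτ => hK.hasDerivAt_l2NormSq_deriv hτ)
    ((hK.eventually_mul_l2NormSq_deriv_le (by linarith) hconv hr).mono fun τ hτ => by linarith)
  have hlim : Tendsto (fun τ => C * exp (-(2 * r) * τ)) atTop (𝓝 (C * 0)) :=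
    (tendsto_exp_atBot.comp
      (tendsto_id.const_mul_atTop_of_neg (by linarith : -(2 * r) < 0))).const_mul C
  exact squeeze_zero' (.of_forall fun _ => l2NormSq_nonneg _) hC (mul_zero C ▸ hlim)

theorem eventually_mul_l2NormSq_deriv_deriv_le (hK : IsRescaledFlow_s12 p K) (hp : 1 / 3 < p)
    (hconv : TendstoUniformly (fun τ θ => K θ τ) (fun _ => 1) atTop) (r : ℝ) :
    ∀ᶠ τ in atTop, r * l2NormSq (deriv (deriv (K · τ))) ≤
      (∫ θ in (0 : ℝ)..2 * π,
        deriv (deriv (deriv (K · τ))) θ * deriv (curvatureVelocity p (K · τ)) θ) +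
          (2 * r ^ 2 / p + 8 * (p + 1) ^ 2 / p) * l2NormSq (deriv (K · τ)) := by
  have hp₀ : 0 < p := by linarith
  have hthreshold : 0 < p ^ 2 / (128 * π * (p + 1) ^ 2) := by positivity
  filter_upwards [eventually_abs_rpow_sub_one_le hconv (1 + 1 / p) one_half_pos,
    eventually_abs_rpow_sub_one_le hconv (1 / p) one_pos,
    (hK.tendsto_l2NormSq_deriv hp hconv).eventually_le_const hthreshold, eventually_gt_atTop 0]
    with τ hε hε' hsmall hτ
  exact mul_l2NormSq_le_integral_deriv_mul_deriv_curvatureVelocity_add hp₀ (hK.pos hτ)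
    ((hK.contDiff_s12 hτ).of_le ENat.LEInfty.out) (hK.periodic hτ) hε
    (fun θ => by linarith [(abs_le.1 (hε' θ)).2]) hsmall r

/- A large multiple of `‖k'‖²`, which decays at a rate `μ > r`, absorbs the error term in the
differential inequality for `‖k''‖²`. -/
theorem exists_eventually_l2NormSq_deriv_deriv_le (hK : IsRescaledFlow_s12 p K) (hp : 1 / 3 < p)
    (hconv : TendstoUniformly (fun τ θ => K θ τ) (fun _ => 1) atTop) (hr : r < 3 * p - 1) :
    ∃ C, ∀ᶠ τ in atTop, l2NormSq (deriv (deriv (K · τ))) ≤ C * exp (-(2 * r) * τ) := by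
  obtain ⟨μ, hrμ, hμ⟩ := exists_between hr
  have hp₀ : 0 < p := by linarith
  have hμr : 0 < μ - r := sub_pos.2 hrμ
  obtain ⟨N, hN₀, hN⟩ : ∃ N, 0 ≤ N ∧ N * (μ - r) = 2 * r ^ 2 / p + 8 * (p + 1) ^ 2 / p :=
    ⟨(2 * r ^ 2 / p + 8 * (p + 1) ^ 2 / p) / (μ - r), by positivity, div_mul_cancel₀ _ hμr.ne'⟩
  obtain ⟨C, hC⟩ := exists_eventually_le_mul_exp (c := -(2 * r))
    ((eventually_gt_atTop 0).mono fun τ hτ =>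
      (hK.hasDerivAt_l2NormSq_deriv_deriv hτ).fun_add
        ((hK.hasDerivAt_l2NormSq_deriv hτ).const_mul N)) (by
    filter_upwards [hK.eventually_mul_l2NormSq_deriv_deriv_le hp hconv r,
      hK.eventually_mul_l2NormSq_deriv_le hp₀ hconv hμ] with τ hB hQ
    have hNQ := mul_le_mul_of_nonneg_left hQ hN₀
    linear_combination 2 * hB + 2 * hNQ - 2 * l2NormSq (deriv (K · τ)) * hN)
  refine ⟨C, hC.mono fun τ hτ => le_trans ?_ hτ⟩
  exact le_add_of_nonneg_right (mul_nonneg hN₀ (l2NormSq_nonneg _))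

theorem continuousOn_l2NormSq_deriv_deriv (hK : IsRescaledFlow_s12 p K) :
    ContinuousOn (fun τ => l2NormSq (deriv (deriv (K · τ)))) (Ici 0) :=
  continuousOn_integral_Ici (F := fun θ τ => spaceDeriv (spaceDeriv K) θ τ ^ 2) <|
    ((contDiffOn_spaceDeriv (uniqueDiffOn_Ici 0)
      (contDiffOn_spaceDeriv (uniqueDiffOn_Ici 0) hK.contDiffOn)).pow 2).continuousOn

end IsRescaledFlow_s12

end RescaledFlow

theorem second_derivative_L2_decay_general {p r : ℝ} (hp : 1 / 3 < p) (hr : r < 3 * p - 1)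
    {K : ℝ → ℝ → ℝ} (hK : IsRescaledFlow_s12 p K)
    (hconv : TendstoUniformly (fun τ θ => K θ τ) (fun _ => 1) atTop) :
    ∃ C : ℝ, 0 < C ∧ ∀ τ : ℝ, 0 ≤ τ →
      √(l2NormSq (deriv (deriv (K · τ)))) ≤ C * exp (-r * τ) := by
  obtain ⟨C, hC₀, hC⟩ := exists_forall_le_mul_exp hK.continuousOn_l2NormSq_deriv_deriv
    (hK.exists_eventually_l2NormSq_deriv_deriv_le hp hconv hr)
  refine ⟨√C, sqrt_pos.2 hC₀, fun τ hτ => (sqrt_le_sqrt (hC τ hτ)).trans_eq ?_⟩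
  rw [sqrt_mul hC₀.le, ← exp_half]
  ring_nf

/-- Lemma 3.6: exponential decay of the `L²` norm of the second angular
derivative of the normalized curvature. -/
theorem second_derivative_L2_decay
    (p : ℝ) (hp : 1 ≤ p) (K : ℝ → ℝ → ℝ)
    (hsmooth : ContDiffOn ℝ (⊤ : ℕ∞) (fun q : ℝ × ℝ => K q.1 q.2) (univ ×ˢ Ici 0))
    (hper : ∀ τ : ℝ, Function.Periodic (fun θ => K θ τ) (2 * π))
    (hpos : ∀ θ τ : ℝ, 0 ≤ τ → 0 < K θ τ)
    (hpde : ∀ θ : ℝ, ∀ τ ∈ Ioi (0:ℝ),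
      deriv (fun s => K θ s) τ =
        p * K θ τ ^ (1 + 1 / p) * deriv (deriv (fun x => K x τ)) θ
          + p * K θ τ ^ (2 + 1 / p) - p * K θ τ)
    (hconv : TendstoUniformly (fun τ θ => K θ τ) (fun _ => 1) atTop) :
    ∀ α : ℝ, 0 < α → α < 1 → ∃ C : ℝ, 0 < C ∧ ∀ τ : ℝ, 0 ≤ τ →
      (∫ θ in (0:ℝ)..(2 * π), (deriv (deriv (fun x => K x τ)) θ) ^ 2) ^ ((1:ℝ) / 2) ≤
        C * Real.exp (-2 * α * p * τ) := by
  intro α _ hα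
  have hK : IsRescaledFlow_s12 p K :=
    ⟨hsmooth, fun {τ} _ => hper τ, fun {τ} hτ θ => hpos θ τ hτ.le, fun {τ} hτ θ => hpde θ τ hτ⟩
  have hrate : 2 * α * p < 3 * p - 1 := by nlinarith
  simpa only [l2NormSq, sqrt_eq_rpow, ← neg_mul] using
    second_derivative_L2_decay_general (by linarith) hrate hK hconv
end
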